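/- For every real number q with 0 < q < 1, the function q ↦ (1/4)·(1 + k(q)^2)/(1 − 4k(q) − k(q)^2) is differentiable at q with derivative equal to E(q^2)^8 E(q^5)^3 / E(q)^7. -/

import Mathlib

open Real

/-- Euler's product `E(q) = ∏_{j=1}^∞ (1 - q^j)`. -/
noncomputable def eulerE (q : ℝ) : ℝ := ∏' j : ℕ, (1 - q ^ (j + 1))

/-- Ramanujan's level-10 function `k(q)`. -/
noncomputable def ramK (q : ℝ) : ℝ :=
  q * ∏' j : ℕ,
    ((1 - q ^ (10 * j + 1)) * (1 - q ^ (10 * j + 2)) * (1 - q ^ (10 * j + 8)) *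
        (1 - q ^ (10 * j + 9))) /
      ((1 - q ^ (10 * j + 3)) * (1 - q ^ (10 * j + 4)) * (1 - q ^ (10 * j + 6)) *
        (1 - q ^ (10 * j + 7)))

/-!
Write `θ(z; q) = (z; q)_∞ (q/z; q)_∞`. The Jacobi triple product shows that
`θ(xy; q) θ(x/y; q)` is a 2 × 2 minor in functions of `x` and of `y`, and the Plücker relation
between such minors is Weierstrass' three-term relation for `θ`. Specialised at powers of `q` it
expresses `1/k - k`, `1/k + 1 - k` and `1/k - 4 - k` as quotients of Euler products.
Its infinitesimal form writes a difference of two values of the Weierstrass function `℘` on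
`ℂˣ / q^ℤ` as a quotient of theta values; at `-ζ` and `-ζ²`, with `ζ` a primitive fifth root of
unity, the difference is a multiple of the Eisenstein series `q k'/k`, which is thereby also a
quotient of Euler products. The derivative of `(1 + k²) / (4 (1 - 4k - k²))` is
`(q k'/k) (1/k + 1 - k) / (q (1/k - 4 - k)²)`.
-/

open Filter Topology

/-! ### Infinite `q`-shifted factorials -/

@[to_additive]
theorem tprod_eq_prod_range_residues {M : Type*} [CommMonoid M] [TopologicalSpace M]
    [ContinuousMul M] [T3Space M] {f : ℕ → M} (N : ℕ) [NeZero N] (hf : Multipliable f)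
    (hres : ∀ a, Multipliable fun j ↦ f (N * j + a)) :
    ∏' n, f n = ∏ a ∈ Finset.range N, ∏' j, f (N * j + a) := by
  have hfiber : HasProd (fun j ↦ ∏ a : Fin N, f (N * j + a)) (∏' n, f n) :=
    ((Nat.divModEquiv N).symm.hasProd_iff.mpr hf.hasProd).prod_fiberwise fun j ↦ by
      convert hasProd_fintype _ using 3
      simp [mul_comm]
  rw [← hfiber.tprod_eq, ← Multipliable.tprod_finsetProd fun a _ ↦ hres a]
  exact tprod_congr fun j ↦ (Finset.prod_range fun a ↦ f (N * j + a)).symm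

section Pochhammer

variable {𝕜 : Type*} [NormedField 𝕜]

/-- The infinite `q`-shifted factorial `(z; q)_∞ = ∏_{n ≥ 0} (1 - z qⁿ)`. -/
noncomputable def qPochhammer (z q : 𝕜) : 𝕜 := ∏' n : ℕ, (1 - z * q ^ n)

/-- Euler's product `(q; q)_∞ = ∏_{n ≥ 1} (1 - qⁿ)` over a normed field, extending `eulerE`. -/
noncomputable def eulerProduct (q : 𝕜) : 𝕜 := qPochhammer q q

theorem norm_pow_lt_one {q : 𝕜} (hq : ‖q‖ < 1) {n : ℕ} (hn : n ≠ 0) : ‖q ^ n‖ < 1 := by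
  simpa only [norm_pow] using pow_lt_one₀ (norm_nonneg q) hq hn

theorem norm_mul_pow_lt_one {z q : 𝕜} (hz : ‖z‖ < 1) (hq : ‖q‖ < 1) (n : ℕ) :
    ‖z * q ^ n‖ < 1 := by
  rw [norm_mul, norm_pow]
  exact mul_lt_one_of_nonneg_of_lt_one_left (norm_nonneg z) hz
    (pow_le_one₀ (norm_nonneg q) hq.le)

theorem one_sub_ne_zero_of_norm_lt_one {z : 𝕜} (hz : ‖z‖ < 1) : 1 - z ≠ 0 := by
  rintro h
  rw [← sub_eq_zero.mp h, norm_one] at hz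
  exact hz.false

theorem summable_norm_mul_pow (z : 𝕜) {q : 𝕜} (hq : ‖q‖ < 1) :
    Summable fun n : ℕ ↦ ‖z * q ^ n‖ := by
  simpa only [norm_mul, norm_pow] using
    (summable_geometric_of_lt_one (norm_nonneg q) hq).mul_left ‖z‖

variable [CompleteSpace 𝕜]

theorem multipliable_one_sub_mul_pow (z : 𝕜) {q : 𝕜} (hq : ‖q‖ < 1) :
    Multipliable fun n : ℕ ↦ 1 - z * q ^ n := by
  simpa only [sub_eq_add_neg] using multipliable_one_add_of_summable
    (f := fun n : ℕ ↦ -(z * q ^ n)) (by simpa only [norm_neg] using summable_norm_mul_pow z hq)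

theorem hasProd_qPochhammer (z : 𝕜) {q : 𝕜} (hq : ‖q‖ < 1) :
    HasProd (fun n : ℕ ↦ 1 - z * q ^ n) (qPochhammer z q) :=
  (multipliable_one_sub_mul_pow z hq).hasProd

theorem qPochhammer_ne_zero {z q : 𝕜} (hq : ‖q‖ < 1) (hz : ∀ n : ℕ, z * q ^ n ≠ 1) :
    qPochhammer z q ≠ 0 := by
  have hne := tprod_one_add_ne_zero_of_summable (f := fun n : ℕ ↦ -(z * q ^ n))
    (fun n ↦ by simpa only [← sub_eq_add_neg] using sub_ne_zero.mpr (hz n).symm)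
    (by simpa only [norm_neg] using summable_norm_mul_pow z hq)
  simpa only [qPochhammer, sub_eq_add_neg] using hne

theorem qPochhammer_ne_zero_of_norm_lt_one {z q : 𝕜} (hq : ‖q‖ < 1) (hz : ‖z‖ < 1) :
    qPochhammer z q ≠ 0 :=
  qPochhammer_ne_zero hq fun n h ↦
    one_sub_ne_zero_of_norm_lt_one (norm_mul_pow_lt_one hz hq n) (by rw [h, sub_self])

theorem qPochhammer_eq_one_sub_mul (z : 𝕜) {q : 𝕜} (hq : ‖q‖ < 1) :
    qPochhammer z q = (1 - z) * qPochhammer (z * q) q := by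
  have hterm (n : ℕ) : 1 - z * q ^ (n + 1) = 1 - z * q * q ^ n := by ring
  have hshift : Multipliable fun n : ℕ ↦ 1 - z * q ^ (n + 1) := by
    simpa only [hterm] using multipliable_one_sub_mul_pow (z * q) hq
  have hsplit := tprod_eq_zero_mul' (f := fun n : ℕ ↦ 1 - z * q ^ n) hshift
  simpa only [qPochhammer, hterm, pow_zero, mul_one] using hsplit

theorem qPochhammer_mul_qPochhammer_neg (z : 𝕜) {q : 𝕜} (hq : ‖q‖ < 1) :
    qPochhammer z q * qPochhammer (-z) q = qPochhammer (z ^ 2) (q ^ 2) := by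
  rw [qPochhammer, qPochhammer, qPochhammer,
    ← (multipliable_one_sub_mul_pow z hq).tprod_mul (multipliable_one_sub_mul_pow (-z) hq)]
  exact tprod_congr fun n ↦ by ring

theorem qPochhammer_dissection (z : 𝕜) {q : 𝕜} (hq : ‖q‖ < 1) (N : ℕ) [NeZero N] :
    qPochhammer z q = ∏ a ∈ Finset.range N, qPochhammer (z * q ^ a) (q ^ N) := by
  have hterm (a n : ℕ) : 1 - z * q ^ a * (q ^ N) ^ n = 1 - z * q ^ (N * n + a) := by ring
  rw [qPochhammer, tprod_eq_prod_range_residues N (multipliable_one_sub_mul_pow z hq)]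
  · simp only [qPochhammer, hterm]
  · intro a
    simpa only [hterm] using
      multipliable_one_sub_mul_pow (z * q ^ a) (norm_pow_lt_one hq (NeZero.ne N))

theorem eulerProduct_ne_zero {q : 𝕜} (hq : ‖q‖ < 1) : eulerProduct q ≠ 0 :=
  qPochhammer_ne_zero_of_norm_lt_one hq hq

theorem eulerProduct_mul_qPochhammer_neg {q : 𝕜} (hq : ‖q‖ < 1) :
    eulerProduct q * qPochhammer (-q) q = eulerProduct (q ^ 2) :=
  qPochhammer_mul_qPochhammer_neg q hq

end Pochhammer

/-! ### Theta functions and the Jacobi triple product -/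

section Theta

variable {𝕜 : Type*} [NormedField 𝕜]

/-- The modified theta function `θ(z; q) = (z; q)_∞ (q/z; q)_∞`. -/
noncomputable def qTheta (z q : 𝕜) : 𝕜 := qPochhammer z q * qPochhammer (q / z) q

theorem qTheta_base_div {z q : 𝕜} (hq₀ : q ≠ 0) : qTheta (q / z) q = qTheta z q := by
  rw [qTheta, qTheta, div_div_cancel₀ hq₀, mul_comm]

variable [CompleteSpace 𝕜]

theorem qTheta_inv {z q : 𝕜} (hq : ‖q‖ < 1) (hz : z ≠ 0) :
    qTheta z⁻¹ q = -z⁻¹ * qTheta z q := by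
  rw [qTheta, qTheta, qPochhammer_eq_one_sub_mul z⁻¹ hq, qPochhammer_eq_one_sub_mul z hq,
    div_inv_eq_mul, mul_comm q z, inv_mul_eq_div]
  field_simp
  ring

theorem qTheta_mul_base {z q : 𝕜} (hq₀ : q ≠ 0) (hq : ‖q‖ < 1) (hz : z ≠ 0) :
    qTheta (q * z) q = -z⁻¹ * qTheta z q := by
  rw [← qTheta_inv hq hz, ← qTheta_base_div hq₀, div_mul_cancel_left₀ hq₀]

theorem qTheta_dissection (z : 𝕜) {q : 𝕜} (hq : ‖q‖ < 1) :
    qTheta z q = qTheta z (q ^ 2) * qTheta (z * q) (q ^ 2) := by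
  rcases eq_or_ne q 0 with rfl | hq₀
  · simp [qTheta, qPochhammer]
  rw [qTheta, qPochhammer_dissection z hq 2, qPochhammer_dissection (q / z) hq 2]
  simp only [Finset.prod_range_succ, Finset.prod_range_zero, one_mul, pow_zero, mul_one, pow_one,
    qTheta]
  rw [div_mul_eq_mul_div, ← sq, show q ^ 2 / (z * q) = q / z by rw [sq]; field_simp]
  ring

end Theta

section JacobiTripleProduct

variable {𝕜 : Type*} [NormedField 𝕜]

/-- The coefficient `(-1)ⁿ q^(n(n-1)/2)` of `zⁿ` in `(q; q)_∞ θ(z; q)`. -/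
noncomputable def jacobiCoeff (q : 𝕜) (n : ℤ) : 𝕜 := (-1) ^ n * q ^ (n * (n - 1) / 2)

/-- The finite product `(q; q)_m = ∏_{k=1}^m (1 - q^k)`. -/
noncomputable def eulerPartialProduct (q : 𝕜) (m : ℕ) : 𝕜 :=
  ∏ k ∈ Finset.range m, (1 - q * q ^ k)

/-- `1 / (q; q)_m`, extended by `0` to negative `m`. -/
noncomputable def eulerPartialInverse (q : 𝕜) (m : ℤ) : 𝕜 :=
  if m < 0 then 0 else (eulerPartialProduct q m.toNat)⁻¹

/-- The coefficient `(-1)ⁿ q^(n(n-1)/2) (q; q)_{2N} / ((q; q)_{N-n} (q; q)_{N+n})` of `zⁿ` in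
`∏_{k < N} (1 - z q^k) (1 - q^(k+1)/z)`. -/
noncomputable def finiteJacobiCoeff (q : 𝕜) (N : ℕ) (n : ℤ) : 𝕜 :=
  jacobiCoeff q n * (eulerPartialProduct q (2 * N) * eulerPartialInverse q (N - n) *
    eulerPartialInverse q (N + n))

theorem jacobiCoeff_add_one {q : 𝕜} (hq₀ : q ≠ 0) (n : ℤ) :
    jacobiCoeff q (n + 1) = -q ^ n * jacobiCoeff q n := by
  have hexp : (n + 1) * (n + 1 - 1) / 2 = n + n * (n - 1) / 2 := by
    rw [show (n + 1) * (n + 1 - 1) = n * (n - 1) + n * 2 by ring,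
      Int.add_mul_ediv_right _ _ two_ne_zero, add_comm]
  rw [jacobiCoeff, jacobiCoeff, hexp, zpow_add₀ hq₀, zpow_add_one₀ (neg_ne_zero.mpr one_ne_zero)]
  ring

theorem eulerPartialInverse_sub_one {q : 𝕜} (hq : ‖q‖ < 1) (m : ℤ) :
    eulerPartialInverse q (m - 1) = (1 - q ^ m) * eulerPartialInverse q m := by
  rcases lt_trichotomy m 0 with hm | rfl | hm
  · simp [eulerPartialInverse, hm, show m - 1 < 0 by lia]
  · simp [eulerPartialInverse]
  · obtain ⟨k, rfl⟩ : ∃ k : ℕ, m = k + 1 := ⟨(m - 1).toNat, by lia⟩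
    have hne := one_sub_ne_zero_of_norm_lt_one (norm_mul_pow_lt_one hq hq k)
    have hpow : q ^ ((k : ℤ) + 1) = q * q ^ k := by rw [← pow_succ']; exact_mod_cast rfl
    rw [add_sub_cancel_right, eulerPartialInverse, eulerPartialInverse, if_neg (by lia),
      if_neg (by lia), hpow, Int.toNat_natCast, Int.toNat_natCast_add_one, eulerPartialProduct,
      eulerPartialProduct, Finset.prod_range_succ, mul_inv_rev, mul_inv_cancel_left₀ hne]

theorem finiteJacobiCoeff_succ {q : 𝕜} (hq₀ : q ≠ 0) (hq : ‖q‖ < 1) (N : ℕ) (n : ℤ) :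
    finiteJacobiCoeff q (N + 1) n =
      (1 + q ^ (2 * N + 1)) * finiteJacobiCoeff q N n - q ^ N * finiteJacobiCoeff q N (n - 1) -
        q ^ (N + 1) * finiteJacobiCoeff q N (n + 1) := by
  have hn : q ^ n ≠ 0 := zpow_ne_zero n hq₀
  have hcoeff : jacobiCoeff q (n - 1) = -(q / q ^ n) * jacobiCoeff q n := by
    have := jacobiCoeff_add_one hq₀ (n - 1)
    rw [sub_add_cancel, zpow_sub_one₀ hq₀] at this
    rw [this]
    field_simp
  have hprod : eulerPartialProduct q (2 * (N + 1)) =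
      eulerPartialProduct q (2 * N) * (1 - q * (q ^ N) ^ 2) * (1 - q ^ 2 * (q ^ N) ^ 2) := by
    simp only [eulerPartialProduct, mul_add, mul_one, Finset.prod_range_succ]
    ring
  have hsub : eulerPartialInverse q (N - n) =
      (1 - q * q ^ N / q ^ n) * eulerPartialInverse q (N + 1 - n) := by
    rw [show (N : ℤ) - n = N + 1 - n - 1 by ring, eulerPartialInverse_sub_one hq, zpow_sub₀ hq₀,
      zpow_add_one₀ hq₀, zpow_natCast, mul_comm q]
  have hadd : eulerPartialInverse q (N + n) =
      (1 - q * q ^ N * q ^ n) * eulerPartialInverse q (N + 1 + n) := by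
    rw [show (N : ℤ) + n = N + 1 + n - 1 by ring, eulerPartialInverse_sub_one hq, zpow_add₀ hq₀,
      zpow_add_one₀ hq₀, zpow_natCast, mul_comm q]
  have hsub' : eulerPartialInverse q (N - (n + 1)) =
      (1 - q ^ N / q ^ n) * eulerPartialInverse q (N - n) := by
    rw [← sub_sub, eulerPartialInverse_sub_one hq, zpow_sub₀ hq₀, zpow_natCast]
  have hadd' : eulerPartialInverse q (N + (n - 1)) =
      (1 - q ^ N * q ^ n) * eulerPartialInverse q (N + n) := by
    rw [← add_sub_assoc, eulerPartialInverse_sub_one hq, zpow_add₀ hq₀, zpow_natCast]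
  simp only [finiteJacobiCoeff, Nat.cast_add, Nat.cast_one, hprod, jacobiCoeff_add_one hq₀, hcoeff,
    hsub', hadd', hsub, hadd, show (N : ℤ) - (n - 1) = N + 1 - n by ring,
    show (N : ℤ) + (n + 1) = N + 1 + n by ring]
  field_simp
  ring

theorem finiteJacobiCoeff_zero (q : 𝕜) (n : ℤ) :
    finiteJacobiCoeff q 0 n = if n = 0 then 1 else 0 := by
  rcases lt_trichotomy n 0 with hn | rfl | hn
  · simp [finiteJacobiCoeff, eulerPartialInverse, hn, hn.ne]
  · simp [finiteJacobiCoeff, eulerPartialInverse, jacobiCoeff, eulerPartialProduct]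
  · simp [finiteJacobiCoeff, eulerPartialInverse, hn, hn.ne']

theorem hasSum_finite_jacobi_triple_product {q z : 𝕜} (hq₀ : q ≠ 0) (hq : ‖q‖ < 1) (hz : z ≠ 0)
    (N : ℕ) :
    HasSum (fun n : ℤ ↦ finiteJacobiCoeff q N n * z ^ n)
      ((∏ k ∈ Finset.range N, (1 - z * q ^ k)) * ∏ k ∈ Finset.range N, (1 - q / z * q ^ k)) := by
  induction N with
  | zero =>
    simpa [finiteJacobiCoeff_zero] using hasSum_single (f := fun n : ℤ ↦
      finiteJacobiCoeff q 0 n * z ^ n) 0 fun n hn ↦ by simp [finiteJacobiCoeff_zero, hn]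
  | succ N ih =>
    have hright := (Equiv.subRight (1 : ℤ)).hasSum_iff.mpr ih
    have hleft := (Equiv.addRight (1 : ℤ)).hasSum_iff.mpr ih
    have hcomb := ((ih.mul_left (1 + q ^ (2 * N + 1))).sub (hright.mul_left (q ^ N * z))).sub
      (hleft.mul_left (q ^ (N + 1) / z))
    have hprod : (∏ k ∈ Finset.range (N + 1), (1 - z * q ^ k)) *
        ∏ k ∈ Finset.range (N + 1), (1 - q / z * q ^ k) =
        (1 + q ^ (2 * N + 1) - q ^ N * z - q ^ (N + 1) / z) *
          ((∏ k ∈ Finset.range N, (1 - z * q ^ k)) *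
            ∏ k ∈ Finset.range N, (1 - q / z * q ^ k)) := by
      simp only [Finset.prod_range_succ]
      field_simp
      ring
    rw [hprod, sub_mul, sub_mul]
    refine hcomb.congr_fun fun n ↦ ?_
    simp only [finiteJacobiCoeff_succ hq₀ hq, Function.comp_apply, Equiv.subRight_apply,
      Equiv.coe_addRight, zpow_sub_one₀ hz, zpow_add_one₀ hz]
    field_simp

theorem eventually_norm_pow_mul_le_half {q : 𝕜} (hq : ‖q‖ < 1) (c : 𝕜) :
    ∀ᶠ n : ℕ in atTop, ‖q ^ n * c‖ ≤ 1 / 2 := by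
  have hlim : Tendsto (fun n : ℕ ↦ ‖q ^ n * c‖) atTop (𝓝 0) := by
    simpa using ((tendsto_pow_atTop_nhds_zero_of_norm_lt_one hq).mul_const c).norm
  exact hlim.eventually_le_const (by norm_num)

theorem summable_norm_jacobiCoeff_mul_zpow {q z : 𝕜} (hq₀ : q ≠ 0) (hq : ‖q‖ < 1) (hz : z ≠ 0) :
    Summable fun n : ℤ ↦ ‖jacobiCoeff q n * z ^ n‖ := by
  have hratio {u : ℕ → 𝕜} {c : 𝕜} (hu : ∀ n, u (n + 1) = -(q ^ n * c) * u n) :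
      Summable fun n ↦ ‖u n‖ := by
    refine summable_of_ratio_norm_eventually_le (r := 1 / 2) (by norm_num) ?_
    filter_upwards [eventually_norm_pow_mul_le_half hq c] with n hn
    rw [hu, norm_norm, norm_norm, norm_mul, norm_neg]
    gcongr
  apply Summable.of_nat_of_neg
  · refine hratio (c := z) fun n ↦ ?_
    rw [Nat.cast_add_one, jacobiCoeff_add_one hq₀, zpow_add_one₀ hz, zpow_natCast]
    ring
  · refine hratio (c := q / z) fun n ↦ ?_
    have hstep := jacobiCoeff_add_one hq₀ (-((n : ℤ) + 1))
    rw [neg_add, neg_add_cancel_right] at hstep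
    simp only [Nat.cast_add_one, neg_add, hstep, zpow_add₀ hq₀, zpow_add₀ hz, zpow_neg,
      zpow_natCast, zpow_one]
    field_simp

variable [CompleteSpace 𝕜]

theorem tendsto_eulerPartialProduct {q : 𝕜} (hq : ‖q‖ < 1) :
    Tendsto (eulerPartialProduct q) atTop (𝓝 (eulerProduct q)) :=
  (hasProd_qPochhammer q hq).tendsto_prod_nat

theorem tendsto_eulerPartialInverse_natCast_add {q : 𝕜} (hq : ‖q‖ < 1) (n : ℤ) :
    Tendsto (fun N : ℕ ↦ eulerPartialInverse q (N + n)) atTop (𝓝 (eulerProduct q)⁻¹) := by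
  have htoNat : Tendsto (fun N : ℕ ↦ ((N : ℤ) + n).toNat) atTop atTop :=
    tendsto_atTop.mpr fun b ↦ by
      filter_upwards [eventually_ge_atTop (b + n.natAbs)] with N hN
      lia
  refine (((tendsto_eulerPartialProduct hq).inv₀ (eulerProduct_ne_zero hq)).comp htoNat).congr' ?_
  filter_upwards [eventually_ge_atTop n.natAbs] with N hN
  rw [eulerPartialInverse, if_neg (by lia), Function.comp_apply]

theorem exists_norm_finiteJacobiCoeff_le {q : 𝕜} (hq : ‖q‖ < 1) :
    ∃ C, ∀ N n, ‖finiteJacobiCoeff q N n‖ ≤ C * ‖jacobiCoeff q n‖ := by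
  have hprod := tendsto_eulerPartialProduct hq
  obtain ⟨A, hA⟩ := (Metric.isBounded_range_of_tendsto _ hprod).exists_norm_le
  obtain ⟨B, hB⟩ := (Metric.isBounded_range_of_tendsto _
    (hprod.inv₀ (eulerProduct_ne_zero hq))).exists_norm_le
  have hprod_le (m : ℕ) : ‖eulerPartialProduct q m‖ ≤ A := hA _ ⟨m, rfl⟩
  have hA₀ : 0 ≤ A := (norm_nonneg _).trans (hprod_le 0)
  have hB₀ : 0 ≤ B := (norm_nonneg _).trans (hB _ ⟨0, rfl⟩)
  have hinv_le (m : ℤ) : ‖eulerPartialInverse q m‖ ≤ B := by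
    rw [eulerPartialInverse]
    split_ifs
    · simpa using hB₀
    · exact hB _ ⟨m.toNat, rfl⟩
  refine ⟨A * B * B, fun N n ↦ ?_⟩
  rw [finiteJacobiCoeff, mul_comm, norm_mul, norm_mul, norm_mul]
  gcongr
  exacts [hprod_le _, hinv_le _, hinv_le _]

theorem tendsto_finiteJacobiCoeff {q : 𝕜} (hq : ‖q‖ < 1) (n : ℤ) :
    Tendsto (fun N ↦ finiteJacobiCoeff q N n) atTop (𝓝 ((eulerProduct q)⁻¹ * jacobiCoeff q n)) := by
  have hdouble : Tendsto (fun N : ℕ ↦ 2 * N) atTop atTop :=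
    tendsto_id.const_mul_atTop' two_pos
  have hlim := ((((tendsto_eulerPartialProduct hq).comp hdouble).mul
    (tendsto_eulerPartialInverse_natCast_add hq (-n))).mul
    (tendsto_eulerPartialInverse_natCast_add hq n)).const_mul (jacobiCoeff q n)
  rwa [mul_inv_cancel₀ (eulerProduct_ne_zero hq), one_mul, mul_comm] at hlim

theorem jacobi_triple_product {q z : 𝕜} (hq₀ : q ≠ 0) (hq : ‖q‖ < 1) (hz : z ≠ 0) :
    HasSum (fun n : ℤ ↦ jacobiCoeff q n * z ^ n) (eulerProduct q * qTheta z q) := by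
  have hsummable := summable_norm_jacobiCoeff_mul_zpow hq₀ hq hz
  obtain ⟨C, hC⟩ := exists_norm_finiteJacobiCoeff_le hq
  have hseries : Tendsto (fun N ↦ ∑' n : ℤ, finiteJacobiCoeff q N n * z ^ n) atTop
      (𝓝 (∑' n : ℤ, (eulerProduct q)⁻¹ * jacobiCoeff q n * z ^ n)) := by
    refine tendsto_tsum_of_dominated_convergence (hsummable.mul_left C)
      (fun n ↦ (tendsto_finiteJacobiCoeff hq n).mul_const _) (.of_forall fun N n ↦ ?_)
    rw [norm_mul, norm_mul, ← mul_assoc]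
    gcongr
    exact hC N n
  have hproduct : Tendsto (fun N ↦ ∑' n : ℤ, finiteJacobiCoeff q N n * z ^ n) atTop
      (𝓝 (qTheta z q)) := by
    simp only [(hasSum_finite_jacobi_triple_product hq₀ hq hz _).tsum_eq]
    exact (hasProd_qPochhammer z hq).tendsto_prod_nat.mul
      (hasProd_qPochhammer (q / z) hq).tendsto_prod_nat
  have htheta := tendsto_nhds_unique hproduct hseries
  simp only [mul_assoc] at htheta
  rw [htheta, tsum_mul_left, mul_inv_cancel_left₀ (eulerProduct_ne_zero hq)]
  exact hsummable.of_norm.hasSum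

end JacobiTripleProduct

/-! ### Weierstrass' three-term relation -/

/-- Pairs of integers `(m, n)` sorted by the parity of `m + n`: the even ones are `(a + b, a - b)`,
the odd ones `(a + b + 1, a - b)`. -/
noncomputable def intProdParityEquiv : (ℤ × ℤ) ⊕ (ℤ × ℤ) ≃ ℤ × ℤ :=
  Equiv.ofBijective
    (Sum.elim (fun p ↦ (p.1 + p.2, p.1 - p.2)) fun p ↦ (p.1 + p.2 + 1, p.1 - p.2)) <| by
    constructor
    · rintro (⟨a, b⟩ | ⟨a, b⟩) (⟨c, d⟩ | ⟨c, d⟩) h <;>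
        simp only [Sum.elim_inl, Sum.elim_inr, Prod.mk.injEq, Sum.inl.injEq, Sum.inr.injEq,
          reduceCtorEq] at h ⊢ <;> lia
    · rintro ⟨m, n⟩
      rcases Int.even_or_odd' (m + n) with ⟨a, ha | ha⟩
      · exact ⟨.inl (a, m - a), Prod.ext (by simp) (by simp only [Sum.elim_inl]; lia)⟩
      · exact ⟨.inr (a, m - a - 1), Prod.ext (by simp only [Sum.elim_inr]; lia)
          (by simp only [Sum.elim_inr]; lia)⟩

section ThreeTerm

variable {𝕜 : Type*} [NormedField 𝕜]

theorem jacobiCoeff_add_mul_jacobiCoeff_sub {q : 𝕜} (hq₀ : q ≠ 0) (a b : ℤ) :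
    jacobiCoeff q (a + b) * jacobiCoeff q (a - b) =
      (-1) ^ a * jacobiCoeff (q ^ 2) a * ((-q) ^ b * jacobiCoeff (q ^ 2) b) := by
  have htwo (n : ℤ) : 2 * (n * (n - 1) / 2) = n * (n - 1) :=
    Int.mul_ediv_cancel' (Int.even_mul_pred_self n).two_dvd
  have hexp : (a + b) * (a + b - 1) / 2 + (a - b) * (a - b - 1) / 2 =
      2 * (a * (a - 1) / 2) + 2 * (b * (b - 1) / 2) + b := by
    linarith [htwo (a + b), htwo (a - b), htwo a, htwo b]
  have hpow : q ^ ((a + b) * (a + b - 1) / 2) * q ^ ((a - b) * (a - b - 1) / 2) =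
      (q ^ 2) ^ (a * (a - 1) / 2) * (q ^ 2) ^ (b * (b - 1) / 2) * q ^ b := by
    rw [← zpow_add₀ hq₀, hexp, zpow_add₀ hq₀, zpow_add₀ hq₀, zpow_mul, zpow_mul, zpow_ofNat]
  have hsign (n : ℤ) : (-1 : 𝕜) ^ n * (-1) ^ n = 1 := by
    rw [← mul_zpow, neg_one_mul, neg_neg, one_zpow]
  have hsigns : (-1 : 𝕜) ^ (a + b) * (-1) ^ (a - b) =
      (-1) ^ a * (-1) ^ a * ((-1) ^ b * (-1) ^ b) := by
    rw [hsign, hsign, ← zpow_add₀ (neg_ne_zero.mpr one_ne_zero), add_add_sub_cancel,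
      zpow_add₀ (neg_ne_zero.mpr one_ne_zero), hsign, one_mul]
  simp only [jacobiCoeff, neg_eq_neg_one_mul q, mul_zpow]
  linear_combination (-1) ^ (a + b) * (-1) ^ (a - b) * hpow + (q ^ 2) ^ (a * (a - 1) / 2) *
    (q ^ 2) ^ (b * (b - 1) / 2) * q ^ b * hsigns

theorem jacobi_term_add_mul_sub {q x y : 𝕜} (hq₀ : q ≠ 0) (hx : x ≠ 0) (hy : y ≠ 0) (a b : ℤ) :
    jacobiCoeff q (a + b) * (x * y) ^ (a + b) * (jacobiCoeff q (a - b) * (x / y) ^ (a - b)) =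
      jacobiCoeff (q ^ 2) a * (-x ^ 2) ^ a * (jacobiCoeff (q ^ 2) b * (-q * y ^ 2) ^ b) := by
  have hmono : (x * y) ^ (a + b) * (x / y) ^ (a - b) = (x ^ 2) ^ a * (y ^ 2) ^ b := by
    have := zpow_ne_zero a hy
    have := zpow_ne_zero b hx
    simp only [pow_two, mul_zpow, div_zpow, zpow_add₀ hx, zpow_add₀ hy, zpow_sub₀ hx, zpow_sub₀ hy]
    field_simp
  rw [neg_eq_neg_one_mul (x ^ 2), mul_zpow (-1), mul_zpow (-q)]
  linear_combination (x * y) ^ (a + b) * (x / y) ^ (a - b) *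
    jacobiCoeff_add_mul_jacobiCoeff_sub hq₀ a b + (-1) ^ a * jacobiCoeff (q ^ 2) a *
    ((-q) ^ b * jacobiCoeff (q ^ 2) b) * hmono

theorem jacobi_term_add_one_mul_sub {q x y : 𝕜} (hq₀ : q ≠ 0) (hx : x ≠ 0) (hy : y ≠ 0)
    (a b : ℤ) :
    jacobiCoeff q (a + b + 1) * (x * y) ^ (a + b + 1) *
        (jacobiCoeff q (a - b) * (x / y) ^ (a - b)) =
      -(x * y) * (jacobiCoeff (q ^ 2) a * (-q * x ^ 2) ^ a *
        (jacobiCoeff (q ^ 2) b * (-q ^ 2 * y ^ 2) ^ b)) := by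
  rw [jacobiCoeff_add_one hq₀, zpow_add_one₀ (mul_ne_zero hx hy), zpow_add₀ hq₀,
    show -q * x ^ 2 = q * -x ^ 2 by ring, show -q ^ 2 * y ^ 2 = q * (-q * y ^ 2) by ring,
    mul_zpow q, mul_zpow q]
  linear_combination -(q ^ a * q ^ b) * (x * y) * jacobi_term_add_mul_sub hq₀ hx hy a b

variable [CompleteSpace 𝕜]

theorem hasSum_jacobi_mul {q z w : 𝕜} (hq₀ : q ≠ 0) (hq : ‖q‖ < 1) (hz : z ≠ 0) (hw : w ≠ 0) :
    HasSum (fun p : ℤ × ℤ ↦ jacobiCoeff q p.1 * z ^ p.1 * (jacobiCoeff q p.2 * w ^ p.2))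
      (eulerProduct q ^ 2 * (qTheta z q * qTheta w q)) := by
  have hz_sum := summable_norm_jacobiCoeff_mul_zpow hq₀ hq hz
  have hw_sum := summable_norm_jacobiCoeff_mul_zpow hq₀ hq hw
  have hprod := (summable_mul_of_summable_norm hz_sum hw_sum).hasSum
  rwa [← tsum_mul_tsum_of_summable_norm hz_sum hw_sum, (jacobi_triple_product hq₀ hq hz).tsum_eq,
    (jacobi_triple_product hq₀ hq hw).tsum_eq, mul_mul_mul_comm, ← sq] at hprod

theorem qTheta_mul_mul_qTheta_div {q x y : 𝕜} (hq₀ : q ≠ 0) (hq : ‖q‖ < 1) (hx : x ≠ 0)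
    (hy : y ≠ 0) :
    eulerProduct q ^ 2 * (qTheta (x * y) q * qTheta (x / y) q) =
      eulerProduct (q ^ 2) ^ 2 * (qTheta (-x ^ 2) (q ^ 2) * qTheta (-q * y ^ 2) (q ^ 2) -
        x * y * (qTheta (-q * x ^ 2) (q ^ 2) * qTheta (-q ^ 2 * y ^ 2) (q ^ 2))) := by
  have hq2₀ := pow_ne_zero 2 hq₀
  have hq2 := norm_pow_lt_one hq two_ne_zero
  have hneg {c w : 𝕜} (hc : c ≠ 0) (hw : w ≠ 0) : -c * w ^ 2 ≠ 0 :=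
    mul_ne_zero (neg_ne_zero.mpr hc) (pow_ne_zero 2 hw)
  have heven := hasSum_jacobi_mul hq2₀ hq2 (neg_ne_zero.mpr (pow_ne_zero 2 hx)) (hneg hq₀ hy)
  have hodd := (hasSum_jacobi_mul hq2₀ hq2 (hneg hq₀ hx) (hneg hq2₀ hy)).mul_left (-(x * y))
  have hall := intProdParityEquiv.hasSum_iff.mpr
    (hasSum_jacobi_mul hq₀ hq (mul_ne_zero hx hy) (div_ne_zero hx hy))
  rw [hall.unique (HasSum.sum
    (heven.congr_fun fun p ↦ jacobi_term_add_mul_sub hq₀ hx hy p.1 p.2)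
    (hodd.congr_fun fun p ↦ jacobi_term_add_one_mul_sub hq₀ hx hy p.1 p.2))]
  ring

theorem qTheta_mul_mul_qTheta_div_eq_minor {q x y : 𝕜} (hq₀ : q ≠ 0) (hq : ‖q‖ < 1) (hx : x ≠ 0)
    (hy : y ≠ 0) :
    qTheta (x * y) q * qTheta (x / y) q = (eulerProduct (q ^ 2) / eulerProduct q) ^ 2 * x *
      (x * qTheta (-q ^ 2 * x ^ 2) (q ^ 2) * qTheta (-q * y ^ 2) (q ^ 2) -
        qTheta (-q * x ^ 2) (q ^ 2) * (y * qTheta (-q ^ 2 * y ^ 2) (q ^ 2))) := by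
  have hE := eulerProduct_ne_zero hq
  have hshift : qTheta (-x ^ 2) (q ^ 2) = x * (x * qTheta (-q ^ 2 * x ^ 2) (q ^ 2)) := by
    rw [neg_mul, ← mul_neg, qTheta_mul_base (pow_ne_zero 2 hq₀) (norm_pow_lt_one hq two_ne_zero)
      (neg_ne_zero.mpr (pow_ne_zero 2 hx))]
    field_simp
  have hprod := qTheta_mul_mul_qTheta_div hq₀ hq hx hy
  rw [hshift] at hprod
  rw [div_pow, div_mul_eq_mul_div, div_mul_eq_mul_div, eq_div_iff (pow_ne_zero 2 hE)]
  linear_combination hprod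

-- By `qTheta_mul_mul_qTheta_div_eq_minor` this is the Plücker relation for 2 × 2 minors.
theorem qTheta_three_term {q x y u v : 𝕜} (hq₀ : q ≠ 0) (hq : ‖q‖ < 1) (hx : x ≠ 0) (hy : y ≠ 0)
    (hu : u ≠ 0) (hv : v ≠ 0) :
    qTheta (x * y) q * qTheta (x / y) q * (qTheta (u * v) q * qTheta (u / v) q) =
      u / y * (qTheta (x * u) q * qTheta (x / u) q) * (qTheta (y * v) q * qTheta (y / v) q) +
        qTheta (x * v) q * qTheta (x / v) q * (qTheta (u * y) q * qTheta (u / y) q) := by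
  simp only [qTheta_mul_mul_qTheta_div_eq_minor hq₀ hq, hx, hy, hu, hv, ne_eq, not_false_eq_true]
  field_simp
  ring

end ThreeTerm

/-! ### Level-ten theta identities -/

section LevelTen

variable {𝕜 : Type*} [NormedField 𝕜]

theorem qTheta_pow_of_add_eq {q : 𝕜} (hq₀ : q ≠ 0) {m n N : ℕ} (h : m + n = N) :
    qTheta (q ^ m) (q ^ N) = qTheta (q ^ n) (q ^ N) := by
  rw [← qTheta_base_div (pow_ne_zero N hq₀), ← h, pow_add,
    mul_div_cancel_left₀ _ (pow_ne_zero m hq₀)]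

variable [CompleteSpace 𝕜]

theorem qTheta_ne_zero_of_norm_lt_one {z q : 𝕜} (hq : ‖q‖ < 1) (hz : ‖z‖ < 1)
    (hqz : ‖q / z‖ < 1) : qTheta z q ≠ 0 :=
  mul_ne_zero (qPochhammer_ne_zero_of_norm_lt_one hq hz)
    (qPochhammer_ne_zero_of_norm_lt_one hq hqz)

theorem qTheta_pow_ne_zero {q : 𝕜} (hq₀ : q ≠ 0) (hq : ‖q‖ < 1) {n N : ℕ} (hn : n ≠ 0)
    (hnN : n < N) : qTheta (q ^ n) (q ^ N) ≠ 0 := by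
  refine qTheta_ne_zero_of_norm_lt_one (norm_pow_lt_one hq (Nat.ne_zero_of_lt hnN))
    (norm_pow_lt_one hq hn) ?_
  rw [← Nat.sub_add_cancel hnN.le, pow_add, mul_div_cancel_right₀ _ (pow_ne_zero n hq₀)]
  exact norm_pow_lt_one hq (Nat.sub_ne_zero_of_lt hnN)

theorem qPochhammer_neg_self {q : 𝕜} (hq : ‖q‖ < 1) :
    qPochhammer (-q) q = eulerProduct (q ^ 2) / eulerProduct q := by
  rw [← eulerProduct_mul_qPochhammer_neg hq, mul_div_cancel_left₀ _ (eulerProduct_ne_zero hq)]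

theorem qTheta_neg_one {q : 𝕜} (hq : ‖q‖ < 1) :
    qTheta (-1) q = 2 * (eulerProduct (q ^ 2) / eulerProduct q) ^ 2 := by
  rw [qTheta, qPochhammer_eq_one_sub_mul (-1) hq, neg_one_mul, div_neg, div_one,
    qPochhammer_neg_self hq]
  ring

theorem sq_qTheta_neg_mul_qTheta_neg {q y v : 𝕜} (hq₀ : q ≠ 0) (hq : ‖q‖ < 1) (hy : y ≠ 0)
    (hv : v ≠ 0) :
    (qTheta (-y) q * qTheta (-v) q) ^ 2 = (qTheta y q * qTheta v q) ^ 2 +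
      v * qTheta (-1) q ^ 2 * (qTheta (-(y * v)) q * qTheta (-(y / v)) q) := by
  have hneg_inv {z : 𝕜} (hz : z ≠ 0) : qTheta (-z⁻¹) q = z⁻¹ * qTheta (-z) q := by
    rw [← inv_neg, qTheta_inv hq (neg_ne_zero.mpr hz), inv_neg, neg_neg]
  have h := qTheta_three_term hq₀ hq one_ne_zero hy (neg_ne_zero.mpr one_ne_zero)
    (neg_ne_zero.mpr hv)
  simp only [one_mul, mul_neg, neg_mul, neg_neg, mul_one, div_neg, neg_div, one_div, div_one,
    qTheta_inv hq hy, qTheta_inv hq hv, hneg_inv hv, hneg_inv hy] at h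
  generalize qTheta (-(y / v)) q = quot at h ⊢
  field_simp at h
  linear_combination -h

theorem sq_qTheta_mul_qTheta {w c d : 𝕜} (hw₀ : w ≠ 0) (hw : ‖w‖ < 1) (hc : c ≠ 0) (hd : d ≠ 0) :
    (qTheta c (w ^ 2) * qTheta d (w ^ 2)) ^ 2 =
      c * d / w * (qTheta (w / c) (w ^ 2) * qTheta (w / d) (w ^ 2)) ^ 2 +
        qTheta w (w ^ 2) ^ 2 * (qTheta (c * d / w) (w ^ 2) * qTheta (w * d / c) (w ^ 2)) := by
  have hw2₀ := pow_ne_zero 2 hw₀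
  have hw2 := norm_pow_lt_one hw two_ne_zero
  have h := qTheta_three_term hw2₀ hw2 hw₀ (div_ne_zero hc hw₀) one_ne_zero hd
  have hcd : qTheta (c / w / d) (w ^ 2) = -(w * d / c)⁻¹ * qTheta (w * d / c) (w ^ 2) := by
    rw [← qTheta_inv hw2 (div_ne_zero (mul_ne_zero hw₀ hd) hc), inv_div,
      div_div]
  have hd' : qTheta (w * d) (w ^ 2) = qTheta (w / d) (w ^ 2) := by
    rw [← qTheta_base_div hw2₀, sq, mul_div_mul_left _ _ hw₀]
  have hc' : qTheta (c / w) (w ^ 2) = -(w / c)⁻¹ * qTheta (w / c) (w ^ 2) := by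
    rw [← qTheta_inv hw2 (div_ne_zero hw₀ hc), inv_div]
  have hwc : qTheta (w / (c / w)) (w ^ 2) = qTheta c (w ^ 2) := by
    rw [div_div_eq_mul_div, ← sq, qTheta_base_div hw2₀]
  have hcdw : c / w * d = c * d / w := div_mul_eq_mul_div c w d
  simp only [mul_div_cancel₀ c hw₀, hwc, one_mul, one_div, qTheta_inv hw2 hd, mul_one, div_one,
    hcdw, hcd, hd', hc', inv_div] at h
  generalize qTheta (w / c) (w ^ 2) = tc, qTheta (w / d) (w ^ 2) = td,
    qTheta (w * d / c) (w ^ 2) = tq, qTheta (c * d / w) (w ^ 2) = tp at h ⊢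
  field_simp at h ⊢
  linear_combination -h

theorem sq_qTheta_two_mul_qTheta_four {q : 𝕜} (hq₀ : q ≠ 0) (hq : ‖q‖ < 1) :
    (qTheta (q ^ 2) (q ^ 10) * qTheta (q ^ 4) (q ^ 10)) ^ 2 =
      q * (qTheta q (q ^ 10) * qTheta (q ^ 3) (q ^ 10)) ^ 2 +
        qTheta (q ^ 5) (q ^ 10) ^ 2 * (qTheta q (q ^ 10) * qTheta (q ^ 3) (q ^ 10)) := by
  have h := sq_qTheta_mul_qTheta (pow_ne_zero 5 hq₀) (norm_pow_lt_one hq (by simp))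
    (pow_ne_zero 2 hq₀) (pow_ne_zero 4 hq₀)
  rw [← pow_mul, show q ^ 5 / q ^ 2 = q ^ 3 by field_simp, show q ^ 5 / q ^ 4 = q by field_simp,
    show q ^ 2 * q ^ 4 / q ^ 5 = q by field_simp, show q ^ 5 * q ^ 4 / q ^ 2 = q ^ 7 by field_simp,
    qTheta_pow_of_add_eq hq₀ (show 7 + 3 = 5 * 2 by rfl)] at h
  linear_combination h

theorem sq_qTheta_three_mul_qTheta_four {q : 𝕜} (hq₀ : q ≠ 0) (hq : ‖q‖ < 1) :
    (qTheta (q ^ 3) (q ^ 10) * qTheta (q ^ 4) (q ^ 10)) ^ 2 =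
      q ^ 2 * (qTheta q (q ^ 10) * qTheta (q ^ 2) (q ^ 10)) ^ 2 +
        qTheta (q ^ 5) (q ^ 10) ^ 2 * (qTheta (q ^ 2) (q ^ 10) * qTheta (q ^ 4) (q ^ 10)) := by
  have h := sq_qTheta_mul_qTheta (pow_ne_zero 5 hq₀) (norm_pow_lt_one hq (by simp))
    (pow_ne_zero 3 hq₀) (pow_ne_zero 4 hq₀)
  rw [← pow_mul, show q ^ 5 / q ^ 3 = q ^ 2 by field_simp, show q ^ 5 / q ^ 4 = q by field_simp,
    show q ^ 3 * q ^ 4 / q ^ 5 = q ^ 2 by field_simp,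
    show q ^ 5 * q ^ 4 / q ^ 3 = q ^ 6 by field_simp,
    qTheta_pow_of_add_eq hq₀ (show 6 + 4 = 5 * 2 by rfl)] at h
  linear_combination h

theorem qTheta_mul_qTheta_mul_qPochhammer_five {q ε : 𝕜} (hq₀ : q ≠ 0) (hq : ‖q‖ < 1)
    (hε : ε ^ 2 = 1) :
    qTheta (ε * q) (q ^ 5) * qTheta (ε * q ^ 2) (q ^ 5) * qPochhammer (ε * q ^ 5) (q ^ 5) =
      qPochhammer (ε * q) q := by
  have hε₀ : ε ≠ 0 := by rintro rfl; simp at hε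
  have h4 : q ^ 5 / (ε * q) = ε * q * q ^ 3 := by
    rw [div_eq_iff (mul_ne_zero hε₀ hq₀)]; linear_combination -q ^ 5 * hε
  have h3 : q ^ 5 / (ε * q ^ 2) = ε * q * q ^ 2 := by
    rw [div_eq_iff (mul_ne_zero hε₀ (pow_ne_zero 2 hq₀))]; linear_combination -q ^ 5 * hε
  rw [qPochhammer_dissection (ε * q) hq 5, qTheta, qTheta, h4, h3,
    show ε * q ^ 2 = ε * q * q ^ 1 by ring, show ε * q ^ 5 = ε * q * q ^ 4 by ring]
  simp only [Finset.prod_range_succ, Finset.prod_range_zero, one_mul, pow_zero, mul_one]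
  ring

theorem eulerProduct_eq_qTheta_mul_qTheta_five {q : 𝕜} (hq₀ : q ≠ 0) (hq : ‖q‖ < 1) :
    eulerProduct q = qTheta q (q ^ 5) * qTheta (q ^ 2) (q ^ 5) * eulerProduct (q ^ 5) := by
  simpa only [one_mul, eulerProduct] using
    (qTheta_mul_qTheta_mul_qPochhammer_five hq₀ hq (one_pow 2)).symm

theorem eulerProduct_sq_eq_qTheta_mul {q : 𝕜} (hq : ‖q‖ < 1) :
    eulerProduct q ^ 2 = qTheta q (q ^ 2) * eulerProduct (q ^ 2) ^ 2 := by
  rcases eq_or_ne q 0 with rfl | hq₀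
  · simp [qTheta, eulerProduct, qPochhammer]
  rw [eulerProduct, qPochhammer_dissection q hq 2, qTheta, eulerProduct, sq q,
    mul_div_cancel_right₀ q hq₀]
  simp only [Finset.prod_range_succ, Finset.prod_range_zero, one_mul, pow_zero, mul_one, pow_one]
  ring

theorem eulerProduct_eq_qTheta_ten {q : 𝕜} (hq₀ : q ≠ 0) (hq : ‖q‖ < 1) :
    eulerProduct q = qTheta q (q ^ 10) * qTheta (q ^ 2) (q ^ 10) * qTheta (q ^ 3) (q ^ 10) *
      qTheta (q ^ 4) (q ^ 10) * eulerProduct (q ^ 5) := by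
  have hq5 := norm_pow_lt_one hq (n := 5) (by simp)
  rw [eulerProduct_eq_qTheta_mul_qTheta_five hq₀ hq, qTheta_dissection q hq5,
    qTheta_dissection (q ^ 2) hq5, ← pow_mul, ← pow_add, ← pow_succ',
    qTheta_pow_of_add_eq hq₀ (show 5 + 1 + 4 = 5 * 2 by rfl),
    qTheta_pow_of_add_eq hq₀ (show 2 + 5 + 3 = 5 * 2 by rfl)]
  ring

theorem eulerProduct_two_eq_qTheta_ten {q : 𝕜} (hq₀ : q ≠ 0) (hq : ‖q‖ < 1) :
    eulerProduct (q ^ 2) =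
      qTheta (q ^ 2) (q ^ 10) * qTheta (q ^ 4) (q ^ 10) * eulerProduct (q ^ 10) := by
  simpa only [← pow_mul] using
    eulerProduct_eq_qTheta_mul_qTheta_five (pow_ne_zero 2 hq₀) (norm_pow_lt_one hq two_ne_zero)

theorem eulerProduct_five_sq_eq_qTheta_ten {q : 𝕜} (hq : ‖q‖ < 1) :
    eulerProduct (q ^ 5) ^ 2 = qTheta (q ^ 5) (q ^ 10) * eulerProduct (q ^ 10) ^ 2 := by
  simpa only [← pow_mul] using eulerProduct_sq_eq_qTheta_mul (norm_pow_lt_one hq (n := 5) (by simp))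

theorem qTheta_one_mul_qTheta_three_eq {q : 𝕜} (hq₀ : q ≠ 0) (hq : ‖q‖ < 1) :
    qTheta q (q ^ 10) * qTheta (q ^ 3) (q ^ 10) =
      eulerProduct q * eulerProduct (q ^ 10) / (eulerProduct (q ^ 2) * eulerProduct (q ^ 5)) := by
  have hE₂ := eulerProduct_ne_zero (norm_pow_lt_one hq two_ne_zero)
  have hE₅ := eulerProduct_ne_zero (norm_pow_lt_one hq (n := 5) (by simp))
  rw [eq_div_iff (mul_ne_zero hE₂ hE₅), eulerProduct_eq_qTheta_ten hq₀ hq,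
    eulerProduct_two_eq_qTheta_ten hq₀ hq]
  ring

theorem qTheta_neg_mul_qTheta_neg_five {q : 𝕜} (hq₀ : q ≠ 0) (hq : ‖q‖ < 1) :
    qTheta (-q) (q ^ 5) * qTheta (-q ^ 2) (q ^ 5) =
      eulerProduct (q ^ 2) * eulerProduct (q ^ 5) / (eulerProduct q * eulerProduct (q ^ 10)) := by
  have hq5 := norm_pow_lt_one hq (n := 5) (by simp)
  have hE₅ := eulerProduct_ne_zero hq5
  have hE₁₀ := eulerProduct_ne_zero (norm_pow_lt_one hq (n := 10) (by simp))
  have h := qTheta_mul_qTheta_mul_qPochhammer_five hq₀ hq (neg_one_sq (R := 𝕜))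
  simp only [neg_one_mul, qPochhammer_neg_self hq, qPochhammer_neg_self hq5, ← pow_mul] at h
  rw [eq_div_of_mul_eq (div_ne_zero hE₁₀ hE₅) h, div_div_div_eq]

theorem eulerProduct_level_ten_relation {q : 𝕜} (hq₀ : q ≠ 0) (hq : ‖q‖ < 1) :
    eulerProduct (q ^ 2) ^ 2 * eulerProduct (q ^ 5) ^ 5 =
      eulerProduct q ^ 4 * eulerProduct (q ^ 5) * eulerProduct (q ^ 10) ^ 2 +
        4 * q * eulerProduct q * eulerProduct (q ^ 2) * eulerProduct (q ^ 10) ^ 5 := by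
  have hq5 := norm_pow_lt_one hq (n := 5) (by simp)
  have hE₁ := eulerProduct_ne_zero hq
  have hE₅ := eulerProduct_ne_zero hq5
  have hE₁₀ := eulerProduct_ne_zero (norm_pow_lt_one hq (n := 10) (by simp))
  have hplus := eq_div_of_mul_eq hE₅ (eulerProduct_eq_qTheta_mul_qTheta_five hq₀ hq).symm
  have hthree : qTheta (-q ^ 3) (q ^ 5) = qTheta (-q ^ 2) (q ^ 5) := by
    rw [← qTheta_base_div (pow_ne_zero 5 hq₀), div_neg, pow_add q 3 2,
      mul_div_cancel_left₀ _ (pow_ne_zero 3 hq₀)]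
  have h := sq_qTheta_neg_mul_qTheta_neg (pow_ne_zero 5 hq₀) hq5 (pow_ne_zero 2 hq₀) hq₀
  rw [← pow_succ, show q ^ 2 / q = q by field_simp, hthree, qTheta_neg_one hq5, ← pow_mul,
    mul_comm (qTheta (-q ^ 2) _), mul_comm (qTheta (q ^ 2) _), hplus,
    qTheta_neg_mul_qTheta_neg_five hq₀ hq] at h
  generalize eulerProduct q = e₁, eulerProduct (q ^ 2) = e₂, eulerProduct (q ^ 5) = e₅,
    eulerProduct (q ^ (5 * 2)) = e₁₀ at *
  field_simp at h
  linear_combination h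

/-- Ramanujan's level-10 function in theta form, over a normed field; it extends `ramK`. -/
noncomputable def levelTenK (q : 𝕜) : 𝕜 :=
  q * (qTheta q (q ^ 10) * qTheta (q ^ 2) (q ^ 10)) /
    (qTheta (q ^ 3) (q ^ 10) * qTheta (q ^ 4) (q ^ 10))

theorem levelTenK_ne_zero {q : 𝕜} (hq₀ : q ≠ 0) (hq : ‖q‖ < 1) : levelTenK q ≠ 0 := by
  have hθ (n : ℕ) (hn : n ≠ 0) (hn' : n < 10) := qTheta_pow_ne_zero hq₀ hq hn hn'
  have hθ₁ := hθ 1 (by simp) (by simp)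
  rw [pow_one] at hθ₁
  exact div_ne_zero (mul_ne_zero hq₀ (mul_ne_zero hθ₁ (hθ 2 (by simp) (by simp))))
    (mul_ne_zero (hθ 3 (by simp) (by simp)) (hθ 4 (by simp) (by simp)))

theorem inv_levelTenK_sub {q : 𝕜} (hq₀ : q ≠ 0) (hq : ‖q‖ < 1) :
    (levelTenK q)⁻¹ - levelTenK q =
      qTheta (q ^ 5) (q ^ 10) ^ 2 / (q * (qTheta q (q ^ 10) * qTheta (q ^ 3) (q ^ 10))) := by
  have hθ (n : ℕ) (hn : n ≠ 0) (hn' : n < 10) := qTheta_pow_ne_zero hq₀ hq hn hn'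
  have hθ₁ := hθ 1 (by simp) (by simp)
  have hθ₂ := hθ 2 (by simp) (by simp)
  have hθ₃ := hθ 3 (by simp) (by simp)
  have hθ₄ := hθ 4 (by simp) (by simp)
  have h := sq_qTheta_three_mul_qTheta_four hq₀ hq
  rw [pow_one] at hθ₁
  rw [levelTenK]
  field_simp
  linear_combination h

theorem inv_levelTenK_sub_eq_eulerProduct {q : 𝕜} (hq₀ : q ≠ 0) (hq : ‖q‖ < 1) :
    (levelTenK q)⁻¹ - levelTenK q = eulerProduct (q ^ 2) * eulerProduct (q ^ 5) ^ 5 /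
      (q * eulerProduct q * eulerProduct (q ^ 10) ^ 5) := by
  have hE₁₀ := eulerProduct_ne_zero (norm_pow_lt_one hq (n := 10) (by simp))
  rw [inv_levelTenK_sub hq₀ hq, qTheta_one_mul_qTheta_three_eq hq₀ hq,
    eq_div_of_mul_eq (pow_ne_zero 2 hE₁₀) (eulerProduct_five_sq_eq_qTheta_ten hq).symm]
  field_simp

theorem inv_levelTenK_add_one_sub_eq_eulerProduct {q : 𝕜} (hq₀ : q ≠ 0) (hq : ‖q‖ < 1) :
    (levelTenK q)⁻¹ + 1 - levelTenK q = eulerProduct (q ^ 2) ^ 4 * eulerProduct (q ^ 5) ^ 2 /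
      (q * eulerProduct (q ^ 10) ^ 4 * eulerProduct q ^ 2) := by
  have hE₁ := eulerProduct_ne_zero hq
  have hE₂ := eulerProduct_ne_zero (norm_pow_lt_one hq two_ne_zero)
  have hE₅ := eulerProduct_ne_zero (norm_pow_lt_one hq (n := 5) (by simp))
  have hE₁₀ := eulerProduct_ne_zero (norm_pow_lt_one hq (n := 10) (by simp))
  have h := sq_qTheta_two_mul_qTheta_four hq₀ hq
  rw [qTheta_one_mul_qTheta_three_eq hq₀ hq,
    eq_div_of_mul_eq (pow_ne_zero 2 hE₁₀) (eulerProduct_five_sq_eq_qTheta_ten hq).symm,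
    eq_div_of_mul_eq hE₁₀ (eulerProduct_two_eq_qTheta_ten hq₀ hq).symm] at h
  rw [add_sub_right_comm, inv_levelTenK_sub_eq_eulerProduct hq₀ hq]
  generalize eulerProduct q = e₁, eulerProduct (q ^ 2) = e₂, eulerProduct (q ^ 5) = e₅,
    eulerProduct (q ^ 10) = e₁₀ at *
  field_simp at h ⊢
  linear_combination -h

theorem inv_levelTenK_sub_four_sub_eq_eulerProduct {q : 𝕜} (hq₀ : q ≠ 0) (hq : ‖q‖ < 1) :
    (levelTenK q)⁻¹ - 4 - levelTenK q = eulerProduct q ^ 3 * eulerProduct (q ^ 5) /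
      (q * eulerProduct (q ^ 2) * eulerProduct (q ^ 10) ^ 3) := by
  have hE₁ := eulerProduct_ne_zero hq
  have hE₂ := eulerProduct_ne_zero (norm_pow_lt_one hq two_ne_zero)
  have hE₁₀ := eulerProduct_ne_zero (norm_pow_lt_one hq (n := 10) (by simp))
  have h := eulerProduct_level_ten_relation hq₀ hq
  rw [sub_right_comm, inv_levelTenK_sub_eq_eulerProduct hq₀ hq]
  generalize eulerProduct q = e₁, eulerProduct (q ^ 2) = e₂, eulerProduct (q ^ 5) = e₅,
    eulerProduct (q ^ 10) = e₁₀ at *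
  field_simp
  linear_combination h

end LevelTen

/-! ### The difference of two `℘`-values -/

section LogDerivative

variable {f : ℕ → ℂ → ℂ} {U : Set ℂ} {x : ℂ} {u : ℕ → ℝ}

theorem differentiableOn_tprod_one_add (hU : IsOpen U) (hf : ∀ n, DifferentiableOn ℂ (f n) U)
    (hu : Summable u) (hfu : ∀ n, ∀ s ∈ U, ‖f n s‖ ≤ u n) :
    DifferentiableOn ℂ (fun s ↦ ∏' n, (1 + f n s)) U :=
  (hu.hasProdLocallyUniformlyOn_nat_one_add hU (.of_forall hfu)
    fun n ↦ (hf n).continuousOn).differentiableOn (.of_forall fun t ↦ by fun_prop) hU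

theorem hasSum_logDeriv_tprod_one_add (hU : IsOpen U) (hx : x ∈ U)
    (hf : ∀ n, DifferentiableOn ℂ (f n) U) (hu : Summable u) (hfu : ∀ n, ∀ s ∈ U, ‖f n s‖ ≤ u n)
    (hne : ∀ n, 1 + f n x ≠ 0) :
    HasSum (fun n ↦ logDeriv (fun s ↦ 1 + f n s) x)
      (logDeriv (fun s ↦ ∏' n, (1 + f n s)) x) := by
  have hprod := hu.hasProdLocallyUniformlyOn_nat_one_add hU (.of_forall hfu)
    fun n ↦ (hf n).continuousOn
  have hprod_ne : ∏' n, (1 + f n x) ≠ 0 := tprod_one_add_ne_zero_of_summable hne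
    (hu.of_nonneg_of_le (fun _ ↦ norm_nonneg _) fun n ↦ hfu n x hx)
  refine (Complex.logDeriv_tendsto hU hx hprod (.of_forall fun t ↦ by fun_prop) hprod_ne).congr
    fun t ↦ logDeriv_prod (fun n _ ↦ hne n) fun n _ ↦ ?_
  exact ((hf n).differentiableAt (hU.mem_nhds hx)).const_add 1

end LogDerivative

section Weierstrass

variable {q : ℂ}

/-- The double-pole series `∑_{n ≥ 0} z qⁿ / (1 - z qⁿ)²`. -/
noncomputable def poleSum (z q : ℂ) : ℂ := ∑' n : ℕ, z * q ^ n / (1 - z * q ^ n) ^ 2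

/-- `∑_{n ∈ ℤ} z qⁿ / (1 - z qⁿ)²`, which is the Weierstrass function of `ℂˣ / q^ℤ` up to
an additive and a multiplicative constant. -/
noncomputable def qWeierstrass (z q : ℂ) : ℂ := poleSum z q + poleSum (q / z) q

/-- The ratio `(z y; q)_∞ (z/y; q)_∞ / (z; q)_∞²` as a function of `s = y + 1/y - 2`. -/
noncomputable def pochhammerRatio (z q s : ℂ) : ℂ :=
  ∏' n : ℕ, (1 + -(s * (z * q ^ n / (1 - z * q ^ n) ^ 2)))

theorem summable_norm_poleSum_term (z : ℂ) (hq : ‖q‖ < 1) :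
    Summable fun n : ℕ ↦ ‖z * q ^ n / (1 - z * q ^ n) ^ 2‖ := by
  have hlim : Tendsto (fun n : ℕ ↦ ((1 - z * q ^ n) ^ 2)⁻¹) atTop (𝓝 ((1 - z * 0) ^ 2)⁻¹) :=
    ((((tendsto_pow_atTop_nhds_zero_of_norm_lt_one hq).const_mul z).const_sub 1).pow 2).inv₀
      (by simp)
  obtain ⟨C, hC⟩ := (Metric.isBounded_range_of_tendsto _ hlim).exists_norm_le
  refine ((summable_norm_mul_pow z hq).mul_right C).of_nonneg_of_le (fun _ ↦ norm_nonneg _)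
    fun n ↦ ?_
  rw [div_eq_mul_inv, norm_mul]
  exact mul_le_mul_of_nonneg_left (hC _ ⟨n, rfl⟩) (norm_nonneg _)

theorem poleSum_eq_add (z : ℂ) (hq : ‖q‖ < 1) :
    poleSum z q = z / (1 - z) ^ 2 + poleSum (z * q) q := by
  rw [poleSum, (summable_norm_poleSum_term z hq).of_norm.tsum_eq_zero_add, poleSum]
  simp only [pow_zero, mul_one, pow_succ', mul_assoc]

theorem pochhammerRatio_zero (z q : ℂ) : pochhammerRatio z q 0 = 1 := by
  simp [pochhammerRatio]

theorem hasDerivAt_pochhammerRatio_zero (z : ℂ) (hq : ‖q‖ < 1) :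
    HasDerivAt (pochhammerRatio z q) (-poleSum z q) 0 := by
  set t : ℕ → ℂ := fun n ↦ z * q ^ n / (1 - z * q ^ n) ^ 2
  have hdiff (n : ℕ) : DifferentiableOn ℂ (fun s ↦ -(s * t n)) (Metric.ball 0 1) := by fun_prop
  have hbound (n : ℕ) (s : ℂ) (hs : s ∈ Metric.ball 0 1) : ‖-(s * t n)‖ ≤ ‖t n‖ := by
    rw [norm_neg, norm_mul]
    exact mul_le_of_le_one_left (norm_nonneg _) (mem_ball_zero_iff.mp hs).le
  have hterm (n : ℕ) : logDeriv (fun s ↦ 1 + -(s * t n)) 0 = -t n := by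
    have hderiv : HasDerivAt (fun s ↦ 1 + -(s * t n)) (-t n) 0 := by
      simpa using (((hasDerivAt_id' 0).mul_const (t n)).fun_neg).const_add 1
    simp [logDeriv_apply, hderiv.deriv]
  have hsummable := summable_norm_poleSum_term z hq
  have hball := Metric.mem_ball_self (x := (0 : ℂ)) one_pos
  have hlog : HasSum (fun n ↦ -t n) (logDeriv (fun s ↦ pochhammerRatio z q s) 0) := by
    simp only [pochhammerRatio]
    simpa only [hterm] using (hasSum_logDeriv_tprod_one_add Metric.isOpen_ball hball hdiff
      hsummable hbound (by simp) :)
  rw [poleSum, ← tsum_neg, hlog.tsum_eq, logDeriv_apply, pochhammerRatio_zero, div_one]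
  exact ((differentiableOn_tprod_one_add Metric.isOpen_ball hdiff hsummable hbound).differentiableAt
    (Metric.isOpen_ball.mem_nhds hball)).hasDerivAt

theorem one_sub_mul_pow_ne_zero_of_qPochhammer_ne_zero {z : ℂ} (hz : qPochhammer z q ≠ 0) (n : ℕ) :
    1 - z * q ^ n ≠ 0 :=
  fun h ↦ hz (tprod_of_exists_eq_zero ⟨n, h⟩)

theorem qPochhammer_mul_mul_qPochhammer_div {z y : ℂ} (hq : ‖q‖ < 1) (hy : y ≠ 0)
    (hz : qPochhammer z q ≠ 0) :
    qPochhammer (z * y) q * qPochhammer (z / y) q =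
      qPochhammer z q ^ 2 * pochhammerRatio z q (y + y⁻¹ - 2) := by
  have hratio : Multipliable fun n : ℕ ↦
      1 + -((y + y⁻¹ - 2) * (z * q ^ n / (1 - z * q ^ n) ^ 2)) := by
    refine multipliable_one_add_of_summable ?_
    simpa only [norm_neg, norm_mul] using (summable_norm_poleSum_term z hq).mul_left ‖y + y⁻¹ - 2‖
  have hmul (w : ℂ) := multipliable_one_sub_mul_pow w hq
  rw [sq, qPochhammer, qPochhammer, qPochhammer, pochhammerRatio, ← (hmul _).tprod_mul (hmul _),
    ← (hmul _).tprod_mul (hmul _), ← ((hmul _).mul (hmul _)).tprod_mul hratio]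
  refine tprod_congr fun n ↦ ?_
  have hne : 1 - z * q ^ n ≠ 0 := one_sub_mul_pow_ne_zero_of_qPochhammer_ne_zero hz n
  field_simp
  ring

theorem qTheta_mul_mul_qTheta_div_eq_pochhammerRatio {z y : ℂ} (hq : ‖q‖ < 1) (hy : y ≠ 0)
    (hz : qTheta z q ≠ 0) :
    qTheta (z * y) q * qTheta (z / y) q = qTheta z q ^ 2 *
      (pochhammerRatio z q (y + y⁻¹ - 2) * pochhammerRatio (q / z) q (y + y⁻¹ - 2)) := by
  have hleft := qPochhammer_mul_mul_qPochhammer_div hq hy (left_ne_zero_of_mul hz)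
  have hright := qPochhammer_mul_mul_qPochhammer_div hq hy (right_ne_zero_of_mul hz)
  rw [qTheta, qTheta, qTheta, ← div_div, div_div_eq_mul_div, mul_div_right_comm]
  linear_combination (qPochhammer (q / z * y) q * qPochhammer (q / z / y) q) * hleft +
    qPochhammer z q ^ 2 * pochhammerRatio z q (y + y⁻¹ - 2) * hright

theorem qTheta_sq_div {y : ℂ} (hq : ‖q‖ < 1) (hy : y ≠ 0) :
    qTheta y q ^ 2 / y =
      (y + y⁻¹ - 2) * (eulerProduct q ^ 2 * pochhammerRatio q q (y + y⁻¹ - 2)) ^ 2 := by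
  rw [eulerProduct, ← qPochhammer_mul_mul_qPochhammer_div hq hy (eulerProduct_ne_zero hq), qTheta,
    qPochhammer_eq_one_sub_mul y hq, mul_comm q y]
  generalize qPochhammer (y * q) q = a, qPochhammer (q / y) q = b
  field_simp
  ring

theorem exists_add_inv_sub_two_eq (s : ℂ) : ∃ y : ℂ, y ≠ 0 ∧ y + y⁻¹ - 2 = s := by
  obtain ⟨r, hr⟩ := IsAlgClosed.exists_eq_mul_self ((s + 2) ^ 2 - 4)
  have hmul : (s + 2 + r) / 2 * ((s + 2 - r) / 2) = 1 := by linear_combination hr / 4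
  refine ⟨_, left_ne_zero_of_mul_eq_one hmul, ?_⟩
  rw [inv_eq_of_mul_eq_one_right hmul]
  ring

theorem pochhammerRatio_three_term {x u : ℂ} (hq₀ : q ≠ 0) (hq : ‖q‖ < 1) (hx : x ≠ 0)
    (hu : u ≠ 0) (hθx : qTheta x q ≠ 0) (hθu : qTheta u q ≠ 0) (s : ℂ) :
    (qTheta x q * qTheta u q) ^ 2 * (pochhammerRatio x q s * pochhammerRatio (q / x) q s -
        pochhammerRatio u q s * pochhammerRatio (q / u) q s) =
      u * (qTheta (x * u) q * qTheta (x / u) q) * eulerProduct q ^ 4 *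
        (s * pochhammerRatio q q s ^ 2) := by
  obtain ⟨y, hy, rfl⟩ := exists_add_inv_sub_two_eq s
  have h := qTheta_three_term hq₀ hq hx hy hu one_ne_zero
  rw [qTheta_mul_mul_qTheta_div_eq_pochhammerRatio hq hy hθx,
    qTheta_mul_mul_qTheta_div_eq_pochhammerRatio hq hy hθu] at h
  simp only [mul_one, div_one] at h
  linear_combination h + u * (qTheta (x * u) q * qTheta (x / u) q) * qTheta_sq_div hq hy

-- Compare the derivatives of both sides of `pochhammerRatio_three_term` at `s = 0`.
theorem qWeierstrass_sub_qWeierstrass {x u : ℂ} (hq₀ : q ≠ 0) (hq : ‖q‖ < 1) (hx : x ≠ 0)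
    (hu : u ≠ 0) (hθx : qTheta x q ≠ 0) (hθu : qTheta u q ≠ 0) :
    (qTheta x q * qTheta u q) ^ 2 * (qWeierstrass u q - qWeierstrass x q) =
      u * (qTheta (x * u) q * qTheta (x / u) q) * eulerProduct q ^ 4 := by
  have hderiv (z : ℂ) := hasDerivAt_pochhammerRatio_zero z hq
  have hleft := ((((hderiv x).fun_mul (hderiv (q / x))).fun_sub
    ((hderiv u).fun_mul (hderiv (q / u)))).const_mul ((qTheta x q * qTheta u q) ^ 2))
  have hright := ((hasDerivAt_id' (0 : ℂ)).fun_mul ((hderiv q).fun_pow 2)).const_mul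
    (u * (qTheta (x * u) q * qTheta (x / u) q) * eulerProduct q ^ 4)
  rw [funext (pochhammerRatio_three_term hq₀ hq hx hu hθx hθu)] at hleft
  have h := hleft.unique hright
  simp only [pochhammerRatio_zero] at h
  rw [qWeierstrass, qWeierstrass]
  linear_combination h

end Weierstrass

/-! ### Products and Lambert series at roots of unity -/

section RootsOfUnity

theorem prod_range_one_sub_pow_mul {R : Type*} [CommRing R] [IsDomain R] {n : ℕ} [NeZero n] {ζ : R}
    (hζ : IsPrimitiveRoot ζ n) (t : R) :
    ∏ a ∈ Finset.range n, (1 - ζ ^ a * t) = 1 - t ^ n := by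
  have hroots := congrArg (Polynomial.eval 1)
    (X_pow_sub_C_eq_prod hζ (NeZero.pos n) (rfl : t ^ n = t ^ n))
  simpa [Polynomial.eval_prod] using hroots.symm

variable {𝕜 : Type*} [NormedField 𝕜] [CompleteSpace 𝕜] {ζ q : 𝕜} {n : ℕ} [NeZero n]

theorem prod_range_qPochhammer_pow_mul (hζ : IsPrimitiveRoot ζ n) (hq : ‖q‖ < 1) (z : 𝕜) :
    ∏ a ∈ Finset.range n, qPochhammer (ζ ^ a * z) q = qPochhammer (z ^ n) (q ^ n) := by
  simp only [qPochhammer]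
  rw [← Multipliable.tprod_finsetProd fun a _ ↦ multipliable_one_sub_mul_pow (ζ ^ a * z) hq]
  refine tprod_congr fun j ↦ ?_
  simp only [mul_assoc, prod_range_one_sub_pow_mul hζ]
  ring

theorem prod_range_qTheta_pow_mul (hζ : IsPrimitiveRoot ζ n) (hq : ‖q‖ < 1) (z : 𝕜) :
    ∏ a ∈ Finset.range n, qTheta (ζ ^ a * z) q = qTheta (z ^ n) (q ^ n) := by
  have hdiv (a : ℕ) : q / (ζ ^ a * z) = ζ⁻¹ ^ a * (q / z) := by
    rw [inv_pow, div_mul_eq_div_div_swap, div_eq_inv_mul]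
  simp only [qTheta, Finset.prod_mul_distrib, hdiv]
  rw [prod_range_qPochhammer_pow_mul hζ hq, prod_range_qPochhammer_pow_mul hζ.inv hq, div_pow]

end RootsOfUnity

section Lambert

variable {q : ℂ}

theorem summable_nat_mul_mul_pow_pow {w : ℂ} (hw : ‖w‖ < 1) (hq : ‖q‖ < 1) :
    Summable fun p : ℕ × ℕ ↦ (p.1 : ℂ) * (w * q ^ p.2) ^ p.1 := by
  have hw' : Summable fun m : ℕ ↦ (m : ℝ) * ‖w‖ ^ m := by
    simpa using summable_pow_mul_geometric_of_norm_lt_one 1 (r := ‖w‖) (by simpa using hw)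
  refine .of_norm_bounded (hw'.mul_of_nonneg (summable_geometric_of_lt_one (norm_nonneg q) hq)
    (fun _ ↦ by positivity) fun _ ↦ by positivity) ?_
  rintro ⟨m, n⟩
  rcases Nat.eq_zero_or_pos m with rfl | hm
  · simp
  · simp only [norm_mul, norm_pow, Complex.norm_natCast, mul_pow, mul_assoc, ← pow_mul]
    have hpow := pow_le_pow_of_le_one (norm_nonneg q) hq.le (Nat.le_mul_of_pos_right n hm)
    gcongr

theorem tsum_nat_mul_mul_pow_pow {w : ℂ} (hw : ‖w‖ < 1) (hq : ‖q‖ < 1) :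
    ∑' p : ℕ × ℕ, (p.1 : ℂ) * (w * q ^ p.2) ^ p.1 = poleSum w q := by
  have hswap := (summable_nat_mul_mul_pow_pow hw hq).prod_symm
  rw [← (Equiv.prodComm ℕ ℕ).tsum_eq, poleSum]
  refine hswap.tsum_prod.trans (tsum_congr fun n ↦ ?_)
  exact tsum_coe_mul_geometric_of_norm_lt_one (norm_mul_pow_lt_one hw hq n)

theorem hasSum_poleSum {w : ℂ} (hw : ‖w‖ < 1) (hq : ‖q‖ < 1) :
    HasSum (fun m : ℕ ↦ m * w ^ m / (1 - q ^ m)) (poleSum w q) := by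
  rw [← tsum_nat_mul_mul_pow_pow hw hq]
  refine (summable_nat_mul_mul_pow_pow hw hq).hasSum.prod_fiberwise fun m ↦ ?_
  rcases eq_or_ne m 0 with rfl | hm
  · simp
  · have hgeom := (hasSum_geometric_of_norm_lt_one (norm_pow_lt_one hq hm)).mul_left
      ((m : ℂ) * w ^ m)
    have hterm (n : ℕ) : (m : ℂ) * (w * q ^ n) ^ m = m * w ^ m * (q ^ m) ^ n := by ring
    simpa only [hterm, div_eq_mul_inv] using hgeom

theorem hasSum_qWeierstrass {z : ℂ} (hz : ‖z‖ = 1) (hq : ‖q‖ < 1) :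
    HasSum (fun m : ℕ ↦ (z ^ m + z⁻¹ ^ m) * (m * q ^ m / (1 - q ^ m)))
      (qWeierstrass z q - z / (1 - z) ^ 2) := by
  have hzq : ‖z * q‖ < 1 := by rwa [norm_mul, hz, one_mul]
  have hqz : ‖q / z‖ < 1 := by rwa [norm_div, hz, div_one]
  have hadd := (hasSum_poleSum hzq hq).add (hasSum_poleSum hqz hq)
  have hterm (m : ℕ) : m * (z * q) ^ m / (1 - q ^ m) + m * (q / z) ^ m / (1 - q ^ m) =
      (z ^ m + z⁻¹ ^ m) * (m * q ^ m / (1 - q ^ m)) := by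
    rw [div_eq_mul_inv q z]
    ring
  rw [qWeierstrass, poleSum_eq_add z hq, add_assoc, add_sub_cancel_left]
  simpa only [hterm] using hadd

end Lambert

/-- The exponents `ε` in `k(q) = q ∏ (1 - qᵐ) ^ ε(m)`; this is the quadratic character
modulo `5` twisted by `(-1) ^ (m + 1)`. -/
def levelTenExponent : ZMod 10 → ℤ := ![0, 1, 1, -1, -1, 0, -1, -1, 1, 1]

/-- The weight-two Eisenstein series `1 - ∑ ε(m) m qᵐ / (1 - qᵐ)`, the logarithmic derivative
`q k'(q) / k(q)`. -/
noncomputable def levelTenEisenstein (q : ℂ) : ℂ :=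
  1 - ∑' m : ℕ, (levelTenExponent m : ℂ) * (m * q ^ m / (1 - q ^ m))

section FifthRoots

variable {q ζ : ℂ}

theorem geom_sum_primitiveRoot_five (hζ : IsPrimitiveRoot ζ 5) :
    1 + ζ + ζ ^ 2 + ζ ^ 3 + ζ ^ 4 = 0 := by
  simpa [Finset.sum_range_succ] using hζ.geom_sum_eq_zero (by norm_num)

theorem one_add_mul_one_add_sq_primitiveRoot_five (hζ : IsPrimitiveRoot ζ 5) :
    (1 + ζ) * (1 + ζ ^ 2) = -ζ ^ 4 := by
  linear_combination geom_sum_primitiveRoot_five hζ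

theorem inv_neg_primitiveRoot_five (hζ : IsPrimitiveRoot ζ 5) : (-ζ)⁻¹ = -ζ ^ 4 :=
  inv_eq_of_mul_eq_one_right (by linear_combination hζ.pow_eq_one)

theorem inv_neg_sq_primitiveRoot_five (hζ : IsPrimitiveRoot ζ 5) : (-ζ ^ 2)⁻¹ = -ζ ^ 3 :=
  inv_eq_of_mul_eq_one_right (by linear_combination hζ.pow_eq_one)

/-- The quadratic Gauss sum `ζ - ζ² - ζ³ + ζ⁴` modulo `5`. -/
def gaussSumFive (ζ : ℂ) : ℂ := ζ + ζ ^ 4 - ζ ^ 2 - ζ ^ 3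

theorem gaussSumFive_sq (hζ : IsPrimitiveRoot ζ 5) : gaussSumFive ζ ^ 2 = 5 := by
  have hsum : (ζ + ζ ^ 4) + (ζ ^ 2 + ζ ^ 3) = -1 := by
    linear_combination geom_sum_primitiveRoot_five hζ
  have hprod : (ζ + ζ ^ 4) * (ζ ^ 2 + ζ ^ 3) = -1 := by
    linear_combination geom_sum_primitiveRoot_five hζ + (ζ + ζ ^ 2) * hζ.pow_eq_one
  rw [gaussSumFive]
  linear_combination (ζ + ζ ^ 4 + ζ ^ 2 + ζ ^ 3 - 1) * hsum - 4 * hprod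

theorem gaussSumFive_mul_levelTenExponent (hζ : IsPrimitiveRoot ζ 5) (m : ℕ) :
    gaussSumFive ζ * levelTenExponent m =
      (-ζ ^ 2) ^ m + (-ζ ^ 3) ^ m - ((-ζ) ^ m + (-ζ ^ 4) ^ m) := by
  have hred (a : ℕ) : (-ζ ^ a) ^ m = (-1) ^ (m % 10) * ζ ^ (a * (m % 10) % 5) := by
    have h10 : (-ζ ^ a) ^ 10 = 1 := by
      rw [Even.neg_pow (by decide), ← pow_mul, show a * 10 = 5 * (2 * a) by ring, pow_mul,
        hζ.pow_eq_one, one_pow]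
    rw [pow_eq_pow_mod m h10, neg_pow, ← pow_mul, pow_eq_pow_mod _ hζ.pow_eq_one]
  have hred_one := hred 1
  rw [pow_one] at hred_one
  rw [hred 2, hred 3, hred 4, hred_one, ← ZMod.natCast_mod m 10, gaussSumFive]
  have hm := Nat.mod_lt m (y := 10) (by norm_num)
  generalize m % 10 = r at hm ⊢
  interval_cases r <;> simp [levelTenExponent] <;> ring

theorem one_add_primitiveRoot_five_ne_zero (hζ : IsPrimitiveRoot ζ 5) :
    1 + ζ ≠ 0 ∧ 1 + ζ ^ 2 ≠ 0 := by
  rw [← mul_ne_zero_iff, one_add_mul_one_add_sq_primitiveRoot_five hζ]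
  exact neg_ne_zero.mpr (pow_ne_zero 4 (hζ.ne_zero (by norm_num)))

theorem double_pole_sub_double_pole_primitiveRoot_five (hζ : IsPrimitiveRoot ζ 5) :
    -ζ ^ 2 / (1 - -ζ ^ 2) ^ 2 - -ζ / (1 - -ζ) ^ 2 = -gaussSumFive ζ := by
  obtain ⟨hζ₁, hζ₂⟩ := one_add_primitiveRoot_five_ne_zero hζ
  have hsq : ((1 + ζ) * (1 + ζ ^ 2)) ^ 2 = ζ ^ 3 := by
    rw [one_add_mul_one_add_sq_primitiveRoot_five hζ]
    linear_combination ζ ^ 3 * hζ.pow_eq_one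
  rw [sub_neg_eq_add, sub_neg_eq_add, div_sub_div _ _ (pow_ne_zero 2 hζ₂) (pow_ne_zero 2 hζ₁),
    div_eq_iff (by positivity), gaussSumFive]
  linear_combination (ζ + ζ ^ 4 - ζ ^ 2 - ζ ^ 3) * hsq + (ζ ^ 2 - ζ) * hζ.pow_eq_one

theorem qWeierstrass_neg_sq_sub_qWeierstrass_neg (hζ : IsPrimitiveRoot ζ 5) (hq : ‖q‖ < 1) :
    qWeierstrass (-ζ ^ 2) q - qWeierstrass (-ζ) q = -gaussSumFive ζ * levelTenEisenstein q := by
  have hnorm : ‖ζ‖ = 1 := hζ.norm'_eq_one (by norm_num)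
  have hdiff := (hasSum_qWeierstrass (z := -ζ ^ 2) (by simp [hnorm]) hq).sub
    (hasSum_qWeierstrass (z := -ζ) (by simp [hnorm]) hq)
  simp only [inv_neg_primitiveRoot_five hζ, inv_neg_sq_primitiveRoot_five hζ, ← sub_mul,
    ← gaussSumFive_mul_levelTenExponent hζ, mul_assoc] at hdiff
  have hsum := hdiff.tsum_eq
  rw [tsum_mul_left] at hsum
  rw [levelTenEisenstein]
  linear_combination double_pole_sub_double_pole_primitiveRoot_five hζ - hsum

theorem sq_qTheta_neg_mul_qTheta_neg_sq (hζ : IsPrimitiveRoot ζ 5) (hq : ‖q‖ < 1) :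
    (qTheta (-ζ) q * qTheta (-ζ ^ 2) q) ^ 2 *
        (eulerProduct (q ^ 2) * eulerProduct (q ^ 5)) ^ 2 =
      ζ ^ 3 * (eulerProduct q * eulerProduct (q ^ 10)) ^ 2 := by
  have hζ₀ : ζ ≠ 0 := hζ.ne_zero (by norm_num)
  have hq5 := norm_pow_lt_one hq (n := 5) (by simp)
  have hE₁ := eulerProduct_ne_zero hq
  have hE₅ := eulerProduct_ne_zero hq5
  have hθ₁ := qTheta_inv hq (neg_ne_zero.mpr hζ₀)
  have hθ₂ := qTheta_inv hq (neg_ne_zero.mpr (pow_ne_zero 2 hζ₀))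
  rw [inv_neg_primitiveRoot_five hζ, neg_neg] at hθ₁
  rw [inv_neg_sq_primitiveRoot_five hζ, neg_neg] at hθ₂
  have hprod := prod_range_qTheta_pow_mul hζ hq (-1)
  simp only [Finset.prod_range_succ, Finset.prod_range_zero, pow_zero, pow_one, mul_neg_one,
    Odd.neg_one_pow (by decide : Odd 5), qTheta_neg_one hq, qTheta_neg_one hq5, ← pow_mul,
    hθ₁, hθ₂, one_mul, Nat.reduceMul] at hprod
  generalize qTheta (-ζ) q = θ₁, qTheta (-ζ ^ 2) q = θ₂, eulerProduct q = e₁,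
    eulerProduct (q ^ 2) = e₂, eulerProduct (q ^ 5) = e₅, eulerProduct (q ^ 10) = e₁₀ at *
  field_simp at hprod
  linear_combination ζ ^ 3 * hprod - (θ₁ * θ₂ * e₂ * e₅) ^ 2 * (1 + ζ ^ 5) * hζ.pow_eq_one

theorem eulerProduct_mul_qTheta_cube_mul_qTheta_fourth (hζ : IsPrimitiveRoot ζ 5) (hq : ‖q‖ < 1) :
    eulerProduct q * (qTheta (ζ ^ 3) q * qTheta (ζ ^ 4) q) =
      (1 - ζ ^ 3) * (1 - ζ ^ 4) * eulerProduct (q ^ 5) := by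
  have hζ₀ : ζ ≠ 0 := hζ.ne_zero (by norm_num)
  have hdiv₃ : q / ζ ^ 3 = ζ ^ 2 * q := by
    field_simp
    linear_combination -q * hζ.pow_eq_one
  have hdiv₄ : q / ζ ^ 4 = ζ * q := by
    field_simp
    linear_combination -q * hζ.pow_eq_one
  have hprod := prod_range_qPochhammer_pow_mul hζ hq q
  simp only [Finset.prod_range_succ, Finset.prod_range_zero, pow_zero, pow_one, one_mul] at hprod
  rw [qTheta, qTheta, hdiv₃, hdiv₄, qPochhammer_eq_one_sub_mul (ζ ^ 3) hq,
    qPochhammer_eq_one_sub_mul (ζ ^ 4) hq, eulerProduct, eulerProduct]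
  linear_combination (1 - ζ ^ 3) * (1 - ζ ^ 4) * hprod

theorem qTheta_ne_zero_of_norm_eq_one {z : ℂ} (hq : ‖q‖ < 1) (hz : ‖z‖ = 1) (hz₁ : 1 - z ≠ 0) :
    qTheta z q ≠ 0 := by
  have hzq : ‖z * q‖ < 1 := by rwa [norm_mul, hz, one_mul]
  have hqz : ‖q / z‖ < 1 := by rwa [norm_div, hz, div_one]
  rw [qTheta, qPochhammer_eq_one_sub_mul z hq]
  exact mul_ne_zero (mul_ne_zero hz₁ (qPochhammer_ne_zero_of_norm_lt_one hq hzq))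
    (qPochhammer_ne_zero_of_norm_lt_one hq hqz)

theorem levelTenEisenstein_eq_eulerProduct (hq₀ : q ≠ 0) (hq : ‖q‖ < 1) :
    levelTenEisenstein q = eulerProduct q * eulerProduct (q ^ 2) ^ 2 * eulerProduct (q ^ 5) ^ 3 /
      eulerProduct (q ^ 10) ^ 2 := by
  obtain ⟨ζ, hζ⟩ : ∃ ζ : ℂ, IsPrimitiveRoot ζ 5 := ⟨_, Complex.isPrimitiveRoot_exp 5 (by norm_num)⟩
  have hζ₀ : ζ ≠ 0 := hζ.ne_zero (by norm_num)
  have hnorm : ‖ζ‖ = 1 := hζ.norm'_eq_one (by norm_num)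
  obtain ⟨hζ₁, hζ₂⟩ := one_add_primitiveRoot_five_ne_zero hζ
  have hdiff := qWeierstrass_sub_qWeierstrass (x := -ζ) (u := -ζ ^ 2) hq₀ hq (by simpa) (by simpa)
    (qTheta_ne_zero_of_norm_eq_one hq (by simpa) (by simpa))
    (qTheta_ne_zero_of_norm_eq_one hq (by simp [hnorm]) (by simpa))
  have hmul : -ζ * -ζ ^ 2 = ζ ^ 3 := by ring
  have hdiv : -ζ / -ζ ^ 2 = ζ ^ 4 := by
    field_simp
    linear_combination -hζ.pow_eq_one
  rw [qWeierstrass_neg_sq_sub_qWeierstrass_neg hζ hq, hmul, hdiv] at hdiff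
  have hE₁ := eulerProduct_ne_zero hq
  have hE₁₀ := eulerProduct_ne_zero (norm_pow_lt_one hq (n := 10) (by simp))
  have hgauss : gaussSumFive ζ ≠ 0 := fun h ↦ by simpa [h] using gaussSumFive_sq hζ
  have hgauss_mul : gaussSumFive ζ * ζ ^ 3 = ζ ^ 2 * ((1 - ζ ^ 3) * (1 - ζ ^ 4)) := by
    rw [gaussSumFive]
    linear_combination (ζ ^ 2 - ζ ^ 4) * hζ.pow_eq_one
  have hsq := sq_qTheta_neg_mul_qTheta_neg_sq hζ hq
  have hθ := eulerProduct_mul_qTheta_cube_mul_qTheta_fourth hζ hq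
  rw [eq_div_iff (pow_ne_zero 2 hE₁₀)]
  apply mul_left_cancel₀ (mul_ne_zero (mul_ne_zero hgauss (pow_ne_zero 3 hζ₀)) (pow_ne_zero 2 hE₁))
  generalize qTheta (-ζ) q * qTheta (-ζ ^ 2) q = A, qTheta (ζ ^ 3) q * qTheta (ζ ^ 4) q = B,
    eulerProduct q = e₁, eulerProduct (q ^ 2) = e₂, eulerProduct (q ^ 5) = e₅,
    eulerProduct (q ^ 10) = e₁₀, levelTenEisenstein q = L, gaussSumFive ζ = g at *
  linear_combination (-g * L) * hsq - (e₂ * e₅) ^ 2 * hdiff + ζ ^ 2 * e₁ ^ 3 * (e₂ * e₅) ^ 2 * hθ -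
    e₁ ^ 3 * e₂ ^ 2 * e₅ ^ 3 * hgauss_mul

end FifthRoots

/-! ### The logarithmic derivative of `k` -/

section LogDerivLevelTen

variable {q : ℂ}

theorem one_add_neg_pow_ne_zero {m : ℕ} (hq : ‖q‖ < 1) (hm : m ≠ 0) : 1 + -q ^ m ≠ 0 := by
  simpa only [sub_eq_add_neg] using one_sub_ne_zero_of_norm_lt_one (norm_pow_lt_one hq hm)

theorem mul_logDeriv_one_add_neg_pow (q : ℂ) {m : ℕ} (hm : m ≠ 0) :
    q * logDeriv (fun x ↦ 1 + -x ^ m) q = -(m * q ^ m / (1 - q ^ m)) := by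
  have hderiv : HasDerivAt (fun x ↦ 1 + -x ^ m) (-(m * q ^ (m - 1))) q :=
    (hasDerivAt_pow m q).fun_neg.const_add 1
  rw [logDeriv_apply, hderiv.deriv, ← sub_eq_add_neg, ← mul_pow_sub_one hm q]
  ring

section Progression

variable {a N : ℕ}

theorem qPochhammer_pow_pow_eq_tprod (x : ℂ) (a N : ℕ) :
    qPochhammer (x ^ a) (x ^ N) = ∏' n : ℕ, (1 + -x ^ (N * n + a)) := by
  rw [qPochhammer]
  exact tprod_congr fun n ↦ by ring

theorem norm_neg_pow_le {r : ℝ} (hr : r < 1) (hN : N ≠ 0) (n : ℕ) {x : ℂ}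
    (hx : x ∈ Metric.ball 0 r) : ‖-x ^ (N * n + a)‖ ≤ r ^ n := by
  have hxr : ‖x‖ ≤ r := (mem_ball_zero_iff.mp hx).le
  have hr₀ : 0 ≤ r := (norm_nonneg x).trans hxr
  calc ‖-x ^ (N * n + a)‖ = ‖x‖ ^ (N * n + a) := by rw [norm_neg, norm_pow]
    _ ≤ r ^ (N * n + a) := by gcongr
    _ ≤ r ^ n := pow_le_pow_of_le_one hr₀ hr.le
      ((Nat.le_mul_of_pos_left n (Nat.pos_of_ne_zero hN)).trans (Nat.le_add_right _ a))

theorem differentiableAt_qPochhammer_pow_pow (hq : ‖q‖ < 1) (hN : N ≠ 0) :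
    DifferentiableAt ℂ (fun x ↦ qPochhammer (x ^ a) (x ^ N)) q := by
  obtain ⟨r, hqr, hr⟩ := exists_between hq
  simp only [qPochhammer_pow_pow_eq_tprod]
  exact (differentiableOn_tprod_one_add Metric.isOpen_ball (fun n ↦ by fun_prop)
    (summable_geometric_of_lt_one ((norm_nonneg q).trans hqr.le) hr)
    fun n _ ↦ norm_neg_pow_le hr hN n).differentiableAt
      (Metric.isOpen_ball.mem_nhds (mem_ball_zero_iff.mpr hqr))

theorem hasSum_mul_logDeriv_qPochhammer_pow_pow (hq : ‖q‖ < 1) (ha : a ≠ 0) (hN : N ≠ 0) :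
    HasSum (fun n : ℕ ↦ -(((N * n + a : ℕ) : ℂ) * q ^ (N * n + a) / (1 - q ^ (N * n + a))))
      (q * logDeriv (fun x ↦ qPochhammer (x ^ a) (x ^ N)) q) := by
  obtain ⟨r, hqr, hr⟩ := exists_between hq
  have hm (n : ℕ) : N * n + a ≠ 0 := by lia
  have hlog := hasSum_logDeriv_tprod_one_add (f := fun n x ↦ -x ^ (N * n + a)) Metric.isOpen_ball
    (mem_ball_zero_iff.mpr hqr) (fun n ↦ by fun_prop)
    (summable_geometric_of_lt_one ((norm_nonneg q).trans hqr.le) hr)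
    (fun n _ ↦ norm_neg_pow_le hr hN n) fun n ↦ one_add_neg_pow_ne_zero hq (hm n)
  simp only [qPochhammer_pow_pow_eq_tprod]
  simpa only [mul_logDeriv_one_add_neg_pow q (hm _)] using hlog.mul_left q

end Progression

theorem prod_Ico_zpow_levelTenExponent {K : Type*} [Field K] (f : ℕ → K) :
    ∏ a ∈ Finset.Ico (1 : ℕ) 10, f a ^ levelTenExponent a =
      f 1 * f 2 * f 8 * f 9 / (f 3 * f 4 * f 6 * f 7) := by
  simp only [levelTenExponent, Int.reduceNeg, Nat.one_le_ofNat, Finset.prod_Ico_succ_top,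
    Nat.Ico_succ_singleton, Finset.prod_singleton, Nat.cast_one, Matrix.cons_val, zpow_ofNat,
    pow_one, Nat.cast_ofNat, zpow_neg, pow_zero, mul_one]
  ring

theorem levelTenK_eq_prod_zpow (q : ℂ) : levelTenK q =
    q * ∏ a ∈ Finset.Ico (1 : ℕ) 10, qPochhammer (q ^ a) (q ^ 10) ^ levelTenExponent a := by
  rcases eq_or_ne q 0 with rfl | hq₀
  · simp [levelTenK]
  have hdiv (a : ℕ) (ha : a ≤ 10) : q ^ 10 / q ^ a = q ^ (10 - a) := (pow_sub₀ q hq₀ ha ▸ rfl)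
  have hdiv₁ := hdiv 1 (by simp)
  rw [pow_one] at hdiv₁
  rw [levelTenK, qTheta, qTheta, qTheta, qTheta, hdiv₁, hdiv 2 (by simp), hdiv 3 (by simp),
    hdiv 4 (by simp)]
  rw [prod_Ico_zpow_levelTenExponent, pow_one]
  ring

theorem summable_levelTenExponent_mul (hq : ‖q‖ < 1) :
    Summable fun m : ℕ ↦ (levelTenExponent m : ℂ) * (m * q ^ m / (1 - q ^ m)) := by
  have hbound (a : ZMod 10) : ‖(levelTenExponent a : ℂ)‖ ≤ 1 := by
    fin_cases a <;> simp [levelTenExponent]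
  refine (hasSum_poleSum hq hq).summable.norm.of_norm_bounded fun m ↦ ?_
  rw [norm_mul]
  exact mul_le_of_le_one_left (norm_nonneg _) (hbound m)

theorem tsum_levelTenExponent_mul (hq : ‖q‖ < 1) :
    ∑' m : ℕ, (levelTenExponent m : ℂ) * (m * q ^ m / (1 - q ^ m)) =
      -∑ a ∈ Finset.Ico (1 : ℕ) 10, levelTenExponent a *
        (q * logDeriv (fun x ↦ qPochhammer (x ^ a) (x ^ 10)) q) := by
  have hsummable := summable_levelTenExponent_mul hq
  have hperiod (a j : ℕ) : levelTenExponent ((10 * j + a : ℕ) : ZMod 10) = levelTenExponent a := by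
    simp [show (10 : ZMod 10) = 0 from rfl]
  rw [tsum_eq_sum_range_residues 10 hsummable fun a ↦ hsummable.comp_injective fun i j h ↦ by
    simpa using h, Finset.range_eq_Ico, Finset.sum_eq_sum_Ico_succ_bot (by norm_num),
    ← Finset.sum_neg_distrib]
  simp only [hperiod, tsum_mul_left]
  rw [show levelTenExponent ((0 : ℕ) : ZMod 10) = 0 from rfl, Int.cast_zero, zero_mul, zero_add]
  refine Finset.sum_congr rfl fun a ha ↦ ?_
  rw [← (hasSum_mul_logDeriv_qPochhammer_pow_pow hq (by grind) (by simp)).tsum_eq, tsum_neg,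
    mul_neg, neg_neg]

theorem qPochhammer_pow_pow_ten_ne_zero (hq : ‖q‖ < 1) {a : ℕ} (ha : a ∈ Finset.Ico 1 10) :
    qPochhammer (q ^ a) (q ^ 10) ≠ 0 :=
  qPochhammer_ne_zero_of_norm_lt_one (norm_pow_lt_one hq (by simp))
    (norm_pow_lt_one hq (by grind))

theorem differentiableAt_qPochhammer_zpow_levelTenExponent (hq : ‖q‖ < 1) {a : ℕ}
    (ha : a ∈ Finset.Ico 1 10) :
    DifferentiableAt ℂ (fun x ↦ qPochhammer (x ^ a) (x ^ 10) ^ levelTenExponent a) q :=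
  (differentiableAt_qPochhammer_pow_pow hq (by simp)).zpow
    (.inl (qPochhammer_pow_pow_ten_ne_zero hq ha))

theorem differentiableAt_levelTenK (hq : ‖q‖ < 1) : DifferentiableAt ℂ levelTenK q := by
  rw [funext levelTenK_eq_prod_zpow]
  exact differentiableAt_fun_id.fun_mul (.fun_finsetProd fun a ha ↦
    differentiableAt_qPochhammer_zpow_levelTenExponent hq ha)

theorem mul_logDeriv_levelTenK (hq₀ : q ≠ 0) (hq : ‖q‖ < 1) :
    q * logDeriv levelTenK q = levelTenEisenstein q := by
  have hne (a : ℕ) (ha : a ∈ Finset.Ico 1 10) :=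
    zpow_ne_zero (levelTenExponent a) (qPochhammer_pow_pow_ten_ne_zero hq ha)
  have hdiff (a : ℕ) (ha : a ∈ Finset.Ico 1 10) :=
    differentiableAt_qPochhammer_zpow_levelTenExponent hq ha
  rw [funext levelTenK_eq_prod_zpow, logDeriv_mul q hq₀ (Finset.prod_ne_zero_iff.mpr hne)
    differentiableAt_fun_id (.fun_finsetProd hdiff), logDeriv_id',
    logDeriv_prod (f := fun (a : ℕ) x ↦ qPochhammer (x ^ a) (x ^ 10) ^ levelTenExponent a) hne
      hdiff,
    mul_add, mul_one_div_cancel hq₀, levelTenEisenstein, tsum_levelTenExponent_mul hq,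
    sub_neg_eq_add, Finset.mul_sum]
  congr 1
  refine Finset.sum_congr rfl fun a _ ↦ ?_
  rw [logDeriv_fun_zpow (differentiableAt_qPochhammer_pow_pow hq (by simp)), mul_left_comm]

theorem hasDerivAt_levelTenK (hq₀ : q ≠ 0) (hq : ‖q‖ < 1) :
    HasDerivAt levelTenK (levelTenK q * levelTenEisenstein q / q) q := by
  refine (differentiableAt_levelTenK hq).hasDerivAt.congr_deriv ?_
  rw [← mul_logDeriv_levelTenK hq₀ hq, logDeriv_apply]
  have hk := levelTenK_ne_zero hq₀ hq
  field_simp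

end LogDerivLevelTen

/-! ### The derivative formula -/

theorem hasDerivAt_one_add_sq_div {𝕜 : Type*} [NontriviallyNormedField 𝕜] [CharZero 𝕜] {f : 𝕜 → 𝕜}
    {f' x : 𝕜} (hf : HasDerivAt f f' x) (hne : 1 - 4 * f x - f x ^ 2 ≠ 0) :
    HasDerivAt (fun y ↦ (1 / 4) * ((1 + f y ^ 2) / (1 - 4 * f y - f y ^ 2)))
      (f' * (1 + f x - f x ^ 2) / (1 - 4 * f x - f x ^ 2) ^ 2) x := by
  refine ((((hf.fun_pow 2).const_add 1).fun_div
    (((hf.const_mul 4).const_sub 1).fun_sub (hf.fun_pow 2)) hne).const_mul (1 / 4)).congr_deriv ?_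
  field_simp
  push_cast
  ring

theorem hasDerivAt_levelTenK_zero : HasDerivAt levelTenK 1 (0 : ℂ) := by
  have hdiff := DifferentiableAt.fun_finsetProd fun a ha ↦
    differentiableAt_qPochhammer_zpow_levelTenExponent (q := 0) (by simp) ha
  rw [funext levelTenK_eq_prod_zpow]
  refine ((hasDerivAt_id' 0).fun_mul hdiff.hasDerivAt).congr_deriv ?_
  rw [zero_mul, add_zero, one_mul]
  refine Finset.prod_eq_one fun a ha ↦ ?_
  rw [zero_pow (by grind), qPochhammer]
  simp

theorem hasDerivAt_one_add_levelTenK_sq_div {q : ℂ} (hq : ‖q‖ < 1) :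
    HasDerivAt
      (fun x ↦ (1 / 4) * ((1 + levelTenK x ^ 2) / (1 - 4 * levelTenK x - levelTenK x ^ 2)))
      (eulerProduct (q ^ 2) ^ 8 * eulerProduct (q ^ 5) ^ 3 / eulerProduct q ^ 7) q := by
  rcases eq_or_ne q 0 with rfl | hq₀
  · refine (hasDerivAt_one_add_sq_div hasDerivAt_levelTenK_zero ?_).congr_deriv ?_
    all_goals simp [levelTenK, eulerProduct, qPochhammer]
  have hE₁ := eulerProduct_ne_zero hq
  have hE₂ := eulerProduct_ne_zero (norm_pow_lt_one hq two_ne_zero)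
  have hE₅ := eulerProduct_ne_zero (norm_pow_lt_one hq (n := 5) (by simp))
  have hE₁₀ := eulerProduct_ne_zero (norm_pow_lt_one hq (n := 10) (by simp))
  have hk := levelTenK_ne_zero hq₀ hq
  have hnum : 1 + levelTenK q - levelTenK q ^ 2 =
      levelTenK q * ((levelTenK q)⁻¹ + 1 - levelTenK q) := by field_simp
  have hden : 1 - 4 * levelTenK q - levelTenK q ^ 2 =
      levelTenK q * ((levelTenK q)⁻¹ - 4 - levelTenK q) := by field_simp
  rw [inv_levelTenK_add_one_sub_eq_eulerProduct hq₀ hq] at hnum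
  rw [inv_levelTenK_sub_four_sub_eq_eulerProduct hq₀ hq] at hden
  refine (hasDerivAt_one_add_sq_div (hasDerivAt_levelTenK hq₀ hq) ?_).congr_deriv ?_
  · rw [hden]
    positivity
  · rw [hnum, hden, levelTenEisenstein_eq_eulerProduct hq₀ hq]
    generalize eulerProduct q = e₁, eulerProduct (q ^ 2) = e₂, eulerProduct (q ^ 5) = e₅,
      eulerProduct (q ^ 10) = e₁₀ at *
    field_simp

theorem ofReal_tprod (f : ℕ → ℝ) : ((∏' n, f n : ℝ) : ℂ) = ∏' n, (f n : ℂ) :=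
  Function.LeftInverse.map_tprod (g := Complex.ofRealHom) (g' := Complex.re) f
    Complex.continuous_ofReal Complex.continuous_re Complex.ofReal_re

theorem ofReal_eulerE (q : ℝ) : (eulerE q : ℂ) = eulerProduct (q : ℂ) := by
  rw [eulerE, ofReal_tprod, eulerProduct, qPochhammer]
  refine tprod_congr fun j ↦ ?_
  push_cast
  rw [pow_succ']

theorem ofReal_ramK {q : ℝ} (hq : |q| < 1) : (ramK q : ℂ) = levelTenK (q : ℂ) := by
  have hq' : ‖(q : ℂ)‖ < 1 := by simpa using hq
  have hfactor (a : ℕ) := hasProd_qPochhammer ((q : ℂ) ^ a)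
    (norm_pow_lt_one hq' (n := 10) (by simp))
  have hne (a : ℕ) (ha : a ∈ Finset.Ico 1 10) := qPochhammer_pow_pow_ten_ne_zero hq' ha
  have hprod := ((((hfactor 1).mul (hfactor 2)).mul (hfactor 8)).mul (hfactor 9)).div₀
    ((((hfactor 3).mul (hfactor 4)).mul (hfactor 6)).mul (hfactor 7)) (by simp [hne])
  have hpow (a j : ℕ) : (q : ℂ) ^ a * ((q : ℂ) ^ 10) ^ j = q ^ (10 * j + a) := by ring
  simp only [hpow] at hprod
  rw [ramK, Complex.ofReal_mul, ofReal_tprod, levelTenK_eq_prod_zpow,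
    prod_Ico_zpow_levelTenExponent]
  push_cast
  rw [hprod.tprod_eq]

theorem stmt_13_general (q : ℝ) (hq : |q| < 1) :
    HasDerivAt (fun x : ℝ => (1 / 4) * ((1 + ramK x ^ 2) / (1 - 4 * ramK x - ramK x ^ 2)))
      (eulerE (q ^ 2) ^ 8 * eulerE (q ^ 5) ^ 3 / eulerE q ^ 7) q := by
  have hq' : ‖(q : ℂ)‖ < 1 := by simpa using hq
  have hvalue : ((eulerE (q ^ 2) ^ 8 * eulerE (q ^ 5) ^ 3 / eulerE q ^ 7 : ℝ) : ℂ) =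
      eulerProduct ((q : ℂ) ^ 2) ^ 8 * eulerProduct ((q : ℂ) ^ 5) ^ 3 /
        eulerProduct (q : ℂ) ^ 7 := by
    push_cast [ofReal_eulerE]
    rfl
  have hderiv := (hasDerivAt_one_add_levelTenK_sq_div hq').real_of_complex
  rw [← hvalue, Complex.ofReal_re] at hderiv
  refine hderiv.congr_of_eventuallyEq ?_
  filter_upwards [continuous_abs.continuousAt.eventually_lt_const hq] with x hx
  rw [← ofReal_ramK hx, ← Complex.ofReal_re ((1 / 4) * _)]
  push_cast
  rfl

theorem stmt_13 (q : ℝ) (hq0 : 0 < q) (hq1 : q < 1) :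
    HasDerivAt (fun x : ℝ => (1 / 4) * ((1 + ramK x ^ 2) / (1 - 4 * ramK x - ramK x ^ 2)))
      (eulerE (q ^ 2) ^ 8 * eulerE (q ^ 5) ^ 3 / eulerE q ^ 7) q :=
  stmt_13_general q (by rwa [abs_of_pos hq0])
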